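/- Under assumption (A1), for any r>0, y∈E and t>0: (i) sup{ q(s,t;z,y) : z ∈ E with |y−z| ≥ r, s<t } < ∞; and (ii) for every x∈E, lim_{s→0} ∫_{B_r^c(z)} q(0,t−s;x,u) q(t−s,t;u,z) du = 0, where B_r(z)={u∈E : |u−z|<r} and B_r^c(z) is its complement in E. -/

import Mathlib

open MeasureTheory Set Filter Topology ProbabilityTheory
open scoped ENNReal NNReal

noncomputable section
attribute [local instance] Classical.propDecidable

/-- Clamp a time to `[0,1]`. -/
def clamp (t : ℝ) : ℝ := max 0 (min t 1)

/-- `φ` has subquadratic growth on `S`. -/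
def SubquadOn (φ : ℝ → ℝ) (S : Set ℝ) : Prop :=
  ∀ α : ℝ, 0 < α → ∃ K : ℝ, ∀ x ∈ S, |φ x| ≤ K + α * x ^ 2

def Subquad2On (φ : ℝ × ℝ → ℝ) (S : Set (ℝ × ℝ)) : Prop :=
  ∀ α : ℝ, 0 < α → ∃ K : ℝ, ∀ x ∈ S, |φ x| ≤ K + α * (x.1 ^ 2 + x.2 ^ 2)

/-- Assumption (A1): bounded, uniformly elliptic, Lipschitz in space and Hölder in time
coefficients on `[0,1] × E`. -/
structure A1 (E : Set ℝ) (b σ : ℝ → ℝ → ℝ) : Prop where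
  bounded : ∃ C : ℝ, ∀ t ∈ Icc (0:ℝ) 1, ∀ z ∈ E, |b t z| ≤ C ∧ |σ t z| ≤ C
  elliptic : ∃ σ₀ : ℝ, 0 < σ₀ ∧ ∀ t ∈ Icc (0:ℝ) 1, ∀ z ∈ E, σ₀ ≤ σ t z
  lipschitz : ∃ K : ℝ, ∀ t ∈ Icc (0:ℝ) 1, ∀ z ∈ E, ∀ z' ∈ E,
      |b t z - b t z'| ≤ K * |z - z'| ∧ |σ t z - σ t z'| ≤ K * |z - z'|
  holder : ∃ K γ : ℝ, 0 < γ ∧ ∀ z ∈ E, ∀ t ∈ Icc (0:ℝ) 1, ∀ t' ∈ Icc (0:ℝ) 1,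
      |b t z - b t' z| ≤ K * |t - t'| ^ γ ∧ |σ t z - σ t' z| ≤ K * |t - t'| ^ γ

/-- Martingale with respect to a (not necessarily monotone-bundled) family of σ-algebras. -/
def MartingaleWRT {Ω : Type*} {m0 : MeasurableSpace Ω} (P : Measure Ω)
    (𝓖 : ℝ → MeasurableSpace Ω) (M : ℝ → Ω → ℝ) : Prop :=
  (∀ t : ℝ, StronglyMeasurable[𝓖 t] (M t)) ∧
  (∀ t : ℝ, Integrable (M t) P) ∧
  ∀ s t : ℝ, s ≤ t → P[M t | 𝓖 s] =ᵐ[P] M s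

/-- The natural filtration of a process. -/
def natFilt {Ω : Type*} {E' : Type*} [MeasurableSpace E'] (X : ℝ → Ω → E') (t : ℝ) :
    MeasurableSpace Ω :=
  ⨆ s ∈ Iic t, MeasurableSpace.comap (X s) inferInstance

/-- Weak (martingale-problem) formulation of the killed SDE
`dZ_t = 1_{Z_t ∈ E} (β_t dt + ς_t dW_t)` on `[s₀,1]`, with (possibly random)
drift `β` and diffusion `ς` evaluated along the trajectory, absorbed upon leaving `E`. -/
def SolvesKilledSDE {Ω : Type*} {m0 : MeasurableSpace Ω} (P : Measure Ω)
    (𝓖 : ℝ → MeasurableSpace Ω) (E : Set ℝ) (β ς : ℝ → Ω → ℝ)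
    (Z : ℝ → Ω → ℝ) (s₀ : ℝ) : Prop :=
  (∀ t : ℝ, Measurable[𝓖 t] (Z t)) ∧
  (∀ᵐ ω ∂P, Continuous fun t => Z t ω) ∧
  (∀ᵐ ω ∂P, ∀ t, s₀ ≤ t → Z t ω ∉ E → ∀ u, t ≤ u → Z u ω = Z t ω) ∧
  ∀ f : ℝ → ℝ, ContDiff ℝ 2 f → HasCompactSupport f →
    MartingaleWRT P 𝓖 (fun t ω =>
      f (Z (max s₀ (min t 1)) ω) -
        ∫ u in s₀..(max s₀ (min t 1)),
          Set.indicator E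
            (fun x => β u ω * deriv f x + ς u ω ^ 2 / 2 * deriv (deriv f) x) (Z u ω))

/-- The reference killed diffusion with coefficients `b, σ`, in its own filtration. -/
def RefDiffusion {Ω : Type*} {m0 : MeasurableSpace Ω} (P : Measure Ω) (E : Set ℝ)
    (b σ : ℝ → ℝ → ℝ) (Z : ℝ → Ω → ℝ) (s₀ : ℝ) : Prop :=
  SolvesKilledSDE P (natFilt Z) E (fun u ω => b u (Z u ω)) (fun u ω => σ u (Z u ω)) Z s₀

/-- first/second coordinate partial derivatives on `ℝ × ℝ`. -/
def pd1 (f : ℝ × ℝ → ℝ) (x : ℝ × ℝ) : ℝ := fderiv ℝ f x (1, 0)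
def pd2 (f : ℝ × ℝ → ℝ) (x : ℝ × ℝ) : ℝ := fderiv ℝ f x (0, 1)

/-- Weak (martingale-problem) formulation of the two-dimensional killed SDE with
coordinatewise (possibly random) drifts `β1, β2` and diffusions `ς1, ς2`. -/
def SolvesKilledSDE2 {Ω : Type*} {m0 : MeasurableSpace Ω} (P : Measure Ω)
    (𝓖 : ℝ → MeasurableSpace Ω) (E : Set ℝ) (β1 β2 ς1 ς2 : ℝ → Ω → ℝ)
    (X : ℝ → Ω → ℝ × ℝ) : Prop :=
  (∀ t : ℝ, Measurable[𝓖 t] (X t)) ∧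
  (∀ᵐ ω ∂P, Continuous fun t => X t ω) ∧
  (∀ᵐ ω ∂P, ∀ t, 0 ≤ t →
      ((X t ω).1 ∉ E → ∀ u, t ≤ u → (X u ω).1 = (X t ω).1) ∧
      ((X t ω).2 ∉ E → ∀ u, t ≤ u → (X u ω).2 = (X t ω).2)) ∧
  ∀ f : ℝ × ℝ → ℝ, ContDiff ℝ 2 f → HasCompactSupport f →
    MartingaleWRT P 𝓖 (fun t ω =>
      f (X (clamp t) ω) -
        ∫ u in (0:ℝ)..clamp t,
          (Set.indicator E
              (fun _ => β1 u ω * pd1 f (X u ω) + ς1 u ω ^ 2 / 2 * pd1 (pd1 f) (X u ω))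
              ((X u ω).1)
           + Set.indicator E
              (fun _ => β2 u ω * pd2 f (X u ω) + ς2 u ω ^ 2 / 2 * pd2 (pd2 f) (X u ω))
              ((X u ω).2)))

/-- Relative entropy `H(P|R)` (with value `∞` if `P` is not absolutely continuous
with respect to `R` or the log-likelihood ratio is not integrable). -/

def relEnt {Ω : Type*} [MeasurableSpace Ω] (P R : Measure Ω) : ℝ≥0∞ :=
  if P ≪ R ∧ Integrable (llr P R) P then ENNReal.ofReal (∫ ω, llr P R ω ∂P) else ⊤

/-- The law of a process, as a measure on the product path space. -/
def pathLaw {Ω E' : Type*} [MeasurableSpace Ω] [MeasurableSpace E'] (P : Measure Ω)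
    (X : ℝ → Ω → E') : Measure (ℝ → E') := P.map (fun ω t => X t ω)

/-- Time-`t` marginal of a path measure. -/
def tmarg {E' : Type*} [MeasurableSpace E'] (Q : Measure (ℝ → E')) (t : ℝ) : Measure E' :=
  Q.map (fun w => w t)

/-- `C^{1,2}` regularity of `f : (t, z) ↦ f t z` on `T × S`. -/
def C12On (f : ℝ → ℝ → ℝ) (T S : Set ℝ) : Prop :=
  ContinuousOn (fun p : ℝ × ℝ => f p.1 p.2) (T ×ˢ S) ∧
  (∃ ft : ℝ → ℝ → ℝ, ContinuousOn (fun p : ℝ × ℝ => ft p.1 p.2) (T ×ˢ S) ∧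
    ∀ t ∈ T, ∀ x ∈ S, HasDerivAt (fun s => f s x) (ft t x) t) ∧
  (∃ fz fzz : ℝ → ℝ → ℝ,
    ContinuousOn (fun p : ℝ × ℝ => fz p.1 p.2) (T ×ˢ S) ∧
    ContinuousOn (fun p : ℝ × ℝ => fzz p.1 p.2) (T ×ˢ S) ∧
    (∀ t ∈ T, ∀ x ∈ S, HasDerivAt (f t) (fz t x) x ∧ HasDerivAt (fz t) (fzz t x) x))

/-- `C^{1,2}` regularity of `f : (t, x) ↦ f t x`, `x ∈ ℝ²`, on `T × S`. -/
def C12On2 (f : ℝ → ℝ × ℝ → ℝ) (T : Set ℝ) (S : Set (ℝ × ℝ)) : Prop :=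
  ContinuousOn (fun p : ℝ × (ℝ × ℝ) => f p.1 p.2) (T ×ˢ S) ∧
  (∃ ft : ℝ → ℝ × ℝ → ℝ, ContinuousOn (fun p : ℝ × (ℝ × ℝ) => ft p.1 p.2) (T ×ˢ S) ∧
    ∀ t ∈ T, ∀ x ∈ S, HasDerivAt (fun s => f s x) (ft t x) t) ∧
  ∀ t ∈ T, ContDiffOn ℝ 2 (f t) S

/-- `q, L` form the transition density / killing probability pair of the reference
killed diffusion with coefficients `b, σ`, state space `E`. -/
def IsTransDensity (E : Set ℝ) (b σ : ℝ → ℝ → ℝ)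
    (q : ℝ → ℝ → ℝ → ℝ → ℝ) (L : ℝ → ℝ → ℝ → ℝ) : Prop :=
  ∀ s ∈ Ico (0:ℝ) 1, ∀ z ∈ E,
    ∃ (Ω : Type) (m0 : MeasurableSpace Ω) (P : Measure Ω) (Z : ℝ → Ω → ℝ),
      IsProbabilityMeasure P ∧ (∀ᵐ ω ∂P, Z s ω = z) ∧
      RefDiffusion P E b σ Z s ∧
      ∀ t ∈ Ioc s 1,
        (∀ A : Set ℝ, MeasurableSet A → A ⊆ E →
            P.map (Z t) A = ENNReal.ofReal (∫ y in A, q s t z y)) ∧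
        L s t z = 1 - ∫ y in E, q s t z y


/-- A `𝓖`-Brownian motion. -/
def IsBM {Ω : Type*} {m0 : MeasurableSpace Ω} (P : Measure Ω)
    (𝓖 : ℝ → MeasurableSpace Ω) (B : ℝ → Ω → ℝ) : Prop :=
  (∀ t : ℝ, Measurable[𝓖 t] (B t)) ∧ (∀ᵐ ω ∂P, B 0 ω = 0) ∧
  (∀ᵐ ω ∂P, Continuous fun t => B t ω) ∧
  ∀ s t : ℝ, 0 ≤ s → s ≤ t →
    P.map (fun ω => B t ω - B s ω) = gaussianReal 0 (Real.toNNReal (t - s)) ∧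
    ∀ A : Set Ω, MeasurableSet[𝓖 s] A → ∀ C : Set ℝ, MeasurableSet C →
      P (A ∩ (fun ω => B t ω - B s ω) ⁻¹' C) = P A * P.map (fun ω => B t ω - B s ω) C

/-- The joint law on path space of two independent copies of a process with law `lawZ`. -/
def jointLaw (lawZ : Measure (ℝ → ℝ)) : Measure (ℝ → ℝ × ℝ) :=
  (lawZ.prod lawZ).map (fun p t => (p.1 t, p.2 t))

/-- Admissibility for the Schrödinger problem: probability with prescribed
initial and terminal one-dimensional marginals. -/
def SchAdm (μ₀ μ₁ : Measure (ℝ × ℝ)) (Q : Measure (ℝ → ℝ × ℝ)) : Prop :=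
  IsProbabilityMeasure Q ∧ tmarg Q 0 = μ₀ ∧ tmarg Q 1 = μ₁

/-- The `h`-function `h(t,(z,y)) = E^R[f(X¹₁, X²₁) | (X¹_t, X²_t) = (z,y)]`, written out
by means of the transition density `q` and killing probability `L` (absorption point `l`). -/
def hfun (E : Set ℝ) (l : ℝ) (q : ℝ → ℝ → ℝ → ℝ → ℝ) (L : ℝ → ℝ → ℝ → ℝ)
    (f : ℝ × ℝ → ℝ) (t : ℝ) (x : ℝ × ℝ) : ℝ :=
  (∫ z' in E, ∫ y' in E, f (z', y') * q t 1 x.1 z' * q t 1 x.2 y') +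
  (∫ z' in E, f (z', l) * q t 1 x.1 z') * L t 1 x.2 +
  L t 1 x.1 * (∫ y' in E, f (l, y') * q t 1 x.2 y') +
  f (l, l) * L t 1 x.1 * L t 1 x.2

/-- The function `ρ(t,y;z) = ∫_E f(z,u) q(t,1;y,u) du + f(z,ℓ) L(t,1;y)`. -/
def ρfun (E : Set ℝ) (l : ℝ) (q : ℝ → ℝ → ℝ → ℝ → ℝ) (L : ℝ → ℝ → ℝ → ℝ)
    (f : ℝ × ℝ → ℝ) (t y z : ℝ) : ℝ :=
  (∫ u in E, f (z, u) * q t 1 y u) + f (z, l) * L t 1 y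

/-- First marginal density `f₁(z) = ∫ f(z,y) η(dy)`. -/
def fmarg1 (f : ℝ × ℝ → ℝ) (η : Measure ℝ) (z : ℝ) : ℝ := ∫ y, f (z, y) ∂η

/-- Second marginal density `f₂(y) = ∫ f(z,y) η(dz)`. -/
def fmarg2 (f : ℝ × ℝ → ℝ) (η : Measure ℝ) (y : ℝ) : ℝ := ∫ z, f (z, y) ∂η

/-- Normalized `ρ`: `ρ(t,y,z) = ∫_E (f(z,u)/f₁(z)) q(t,1;y,u) du + (f(z,ℓ)/f₁(z)) L(t,1;y)`. -/
def ρnorm (E : Set ℝ) (l : ℝ) (q : ℝ → ℝ → ℝ → ℝ → ℝ) (L : ℝ → ℝ → ℝ → ℝ)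
    (f : ℝ × ℝ → ℝ) (η : Measure ℝ) (t y z : ℝ) : ℝ :=
  (∫ u in E, (f (z, u) / fmarg1 f η z) * q t 1 y u) + (f (z, l) / fmarg1 f η z) * L t 1 y

/-- `π¹(t,y) = ∫ ρ(t,y,w) f₁(w) η(dw)`. -/
def π1fun (E : Set ℝ) (l : ℝ) (q : ℝ → ℝ → ℝ → ℝ → ℝ) (L : ℝ → ℝ → ℝ → ℝ)
    (f : ℝ × ℝ → ℝ) (η : Measure ℝ) (t y : ℝ) : ℝ :=
  ∫ w, ρnorm E l q L f η t y w * fmarg1 f η w ∂η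

/-- The drift of the reference diffusion conditioned on its terminal value `Z1`. -/
def condDrift {Ω : Type*} (E : Set ℝ) (b σ : ℝ → ℝ → ℝ) (q : ℝ → ℝ → ℝ → ℝ → ℝ)
    (L : ℝ → ℝ → ℝ → ℝ) (Z : ℝ → Ω → ℝ) (Z1 : Ω → ℝ) : ℝ → Ω → ℝ :=
  fun u ω => b u (Z u ω) + σ u (Z u ω) ^ 2 *
    (if Z1 ω ∈ E then deriv (fun z => q u 1 z (Z1 ω)) (Z u ω) / q u 1 (Z u ω) (Z1 ω)
     else deriv (fun z => L u 1 z) (Z u ω) / L u 1 (Z u ω))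

/-- A controlled pair `(X¹, X²) = (Z, Y)` as in the constrained Schrödinger problem:
`Z` is the reference diffusion conditioned on its terminal value (known at time `0`,
initial enlargement), and `Y` has controlled drift `b + α` with square-integrable control. -/
def IsControlledPair {Ω : Type*} {m0 : MeasurableSpace Ω} (P : Measure Ω)
    (𝓖 : ℝ → MeasurableSpace Ω) (E : Set ℝ) (b σ : ℝ → ℝ → ℝ)
    (q : ℝ → ℝ → ℝ → ℝ → ℝ) (L : ℝ → ℝ → ℝ → ℝ)
    (Z Y : ℝ → Ω → ℝ) (α : ℝ → Ω → ℝ) (z₀ : ℝ) : Prop :=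
  IsProbabilityMeasure P ∧
  (∀ t : ℝ, Measurable[𝓖 t] (Z t) ∧ Measurable[𝓖 t] (Y t) ∧ Measurable[𝓖 t] (α t)) ∧
  Measurable[𝓖 0] (Z 1) ∧
  (∀ᵐ ω ∂P, Z 0 ω = z₀ ∧ Y 0 ω = z₀) ∧
  SolvesKilledSDE P 𝓖 E (condDrift E b σ q L Z (Z 1)) (fun u ω => σ u (Z u ω)) Z 0 ∧
  SolvesKilledSDE P 𝓖 E (fun u ω => b u (Y u ω) + α u ω) (fun u ω => σ u (Y u ω)) Y 0 ∧
  Integrable (fun ω => ∫ u in (0:ℝ)..1,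
      Set.indicator E (fun _ => α u ω ^ 2 / σ u (Y u ω) ^ 2) (Y u ω)) P

/-- The set `P̄(μ₁)` of laws of admissible controlled pairs with terminal joint law `μ₁`. -/
def ConstrainedClass (E : Set ℝ) (b σ : ℝ → ℝ → ℝ)
    (q : ℝ → ℝ → ℝ → ℝ → ℝ) (L : ℝ → ℝ → ℝ → ℝ) (z₀ : ℝ)
    (μ₁ : Measure (ℝ × ℝ)) : Set (Measure (ℝ → ℝ × ℝ)) :=
  {Q | ∃ (Ω : Type) (m0 : MeasurableSpace Ω) (P : Measure Ω)
        (𝓖 : ℝ → MeasurableSpace Ω) (Z Y : ℝ → Ω → ℝ) (α : ℝ → Ω → ℝ),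
      IsControlledPair P 𝓖 E b σ q L Z Y α z₀ ∧
      Q = pathLaw P (fun t ω => (Z t ω, Y t ω)) ∧
      P.map (fun ω => (Z 1 ω, Y 1 ω)) = μ₁}

/-- The coupled system of Section 5: `Z` the reference diffusion conditioned on the
terminal value `Z1` (a time-`0` measurable randomization with law `f₁ dη`), and `Y`
the `ρ`-h-transform given `Z1`. -/
def CoupledSystem {Ω : Type*} {m0 : MeasurableSpace Ω} (P : Measure Ω)
    (𝓖 : ℝ → MeasurableSpace Ω) (E : Set ℝ) (l : ℝ) (b σ : ℝ → ℝ → ℝ)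
    (q : ℝ → ℝ → ℝ → ℝ → ℝ) (L : ℝ → ℝ → ℝ → ℝ) (f : ℝ × ℝ → ℝ) (η : Measure ℝ)
    (z₀ : ℝ) (Z1 : Ω → ℝ) (Z Y : ℝ → Ω → ℝ) : Prop :=
  IsProbabilityMeasure P ∧ Measurable[𝓖 0] Z1 ∧
  P.map Z1 = η.withDensity (fun z => ENNReal.ofReal (fmarg1 f η z)) ∧
  (∀ᵐ ω ∂P, Z 0 ω = z₀ ∧ Y 0 ω = z₀) ∧
  SolvesKilledSDE P 𝓖 E (condDrift E b σ q L Z Z1) (fun u ω => σ u (Z u ω)) Z 0 ∧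
  SolvesKilledSDE P 𝓖 E
    (fun u ω => b u (Y u ω) + σ u (Y u ω) ^ 2 *
        deriv (fun y => ρnorm E l q L f η u y (Z1 ω)) (Y u ω) /
        ρnorm E l q L f η u (Y u ω) (Z1 ω))
    (fun u ω => σ u (Y u ω)) Y 0


/-! ### Part 1: from the martingale problem to a Fokker-Planck equation for the marginals -/

/-- Coefficient extended by zero outside `[0,1] × E`. -/
def tb (E : Set ℝ) (g : ℝ → ℝ → ℝ) (u x : ℝ) : ℝ :=
  Set.indicator (Icc (0:ℝ) 1 ×ˢ E) (fun p : ℝ × ℝ => g p.1 p.2) (u, x)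

lemma tb_of_mem {E : Set ℝ} {g : ℝ → ℝ → ℝ} {u x : ℝ} (hu : u ∈ Icc (0:ℝ) 1) (hx : x ∈ E) :
    tb E g u x = g u x := by
  unfold tb
  rw [Set.indicator_of_mem]
  exact ⟨hu, hx⟩

lemma tb_of_notMem {E : Set ℝ} {g : ℝ → ℝ → ℝ} {u x : ℝ} (hx : x ∉ E) :
    tb E g u x = 0 := by
  unfold tb
  rw [Set.indicator_of_notMem]
  exact fun h => hx h.2

lemma tb_abs_le {E : Set ℝ} {g : ℝ → ℝ → ℝ} {C : ℝ} (hC : 0 ≤ C)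
    (h : ∀ t ∈ Icc (0:ℝ) 1, ∀ z ∈ E, |g t z| ≤ C) (u x : ℝ) : |tb E g u x| ≤ C := by
  unfold tb
  by_cases hm : (u, x) ∈ Icc (0:ℝ) 1 ×ˢ E
  · rw [Set.indicator_of_mem hm]
    exact h u hm.1 x hm.2
  · rw [Set.indicator_of_notMem hm]
    simpa using hC

lemma tb_measurable {E : Set ℝ} (hEo : IsOpen E) {g : ℝ → ℝ → ℝ} {K K' γ : ℝ} (hγ : 0 < γ)
    (h1 : ∀ t ∈ Icc (0:ℝ) 1, ∀ z ∈ E, ∀ z' ∈ E, |g t z - g t z'| ≤ K * |z - z'|)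
    (h2 : ∀ z ∈ E, ∀ t ∈ Icc (0:ℝ) 1, ∀ t' ∈ Icc (0:ℝ) 1,
      |g t z - g t' z| ≤ K' * |t - t'| ^ γ) :
    Measurable (Function.uncurry (tb E g)) := by
  have hc : ContinuousOn (fun p : ℝ × ℝ => g p.1 p.2) (Icc (0:ℝ) 1 ×ˢ E) := by
    rintro ⟨t0, z0⟩ ⟨ht0, hz0⟩
    unfold ContinuousWithinAt
    rw [tendsto_iff_dist_tendsto_zero]
    have hlim : Tendsto (fun p : ℝ × ℝ => K * |p.2 - z0| + K' * |p.1 - t0| ^ γ)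
        (𝓝[Icc (0:ℝ) 1 ×ˢ E] (t0, z0)) (𝓝 0) := by
      have hcont : Continuous (fun p : ℝ × ℝ => K * |p.2 - z0| + K' * |p.1 - t0| ^ γ) := by
        have : Continuous (fun p : ℝ × ℝ => |p.1 - t0| ^ γ) :=
          Continuous.rpow_const (by fun_prop) (fun _ => Or.inr hγ.le)
        fun_prop
      have := (hcont.tendsto (t0, z0)).mono_left
        (nhdsWithin_le_nhds (s := Icc (0:ℝ) 1 ×ˢ E))
      simpa [Real.zero_rpow hγ.ne'] using this
    refine squeeze_zero' (Eventually.of_forall fun _ => dist_nonneg) ?_ hlim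
    filter_upwards [self_mem_nhdsWithin] with p hp
    rw [Real.dist_eq]
    have e1 := h1 p.1 hp.1 p.2 hp.2 z0 hz0
    have e2 := h2 z0 hz0 p.1 hp.1 t0 ht0
    calc |g p.1 p.2 - g t0 z0| = |(g p.1 p.2 - g p.1 z0) + (g p.1 z0 - g t0 z0)| := by ring_nf
      _ ≤ _ := (abs_add_le _ _).trans (add_le_add e1 e2)
  have hm : MeasurableSet (Icc (0:ℝ) 1 ×ˢ E) := measurableSet_Icc.prod hEo.measurableSet
  have := hc.measurable_piecewise (g := fun _ => (0:ℝ)) continuousOn_const hm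
  have e : Function.uncurry (tb E g) =
      (Icc (0:ℝ) 1 ×ˢ E).piecewise (fun p : ℝ × ℝ => g p.1 p.2) (fun _ => 0) := by
    funext p
    simp [Function.uncurry, tb, Set.piecewise, Set.indicator]
  rw [e]
  exact this

lemma E_isOpen {ℓ : EReal} {E : Set ℝ} (hE : E = {x : ℝ | ℓ < (x : EReal)}) : IsOpen E := by
  subst hE
  exact isOpen_lt continuous_const continuous_coe_real_ereal

/-- Fokker-Planck equation for the marginals of the killed diffusion. -/
structure FP (E : Set ℝ) (b σ : ℝ → ℝ → ℝ) (s z : ℝ) (μ : Kernel ℝ ℝ) : Prop where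
  prob : IsMarkovKernel μ
  init : μ s = Measure.dirac z
  dyn : ∀ f : ℝ → ℝ, ContDiff ℝ 2 f → HasCompactSupport f → ∀ c₁ c₂, s ≤ c₁ → c₁ ≤ c₂ → c₂ ≤ 1 →
    ∫ x, f x ∂(μ c₂) - ∫ x, f x ∂(μ c₁) = ∫ u in c₁..c₂, ∫ x,
      (tb E b u x * deriv f x + tb E σ u x ^ 2 / 2 * deriv (deriv f) x) ∂(μ u)

lemma natFilt_mono {Ω : Type*} (Z : ℝ → Ω → ℝ) {s t : ℝ} (h : s ≤ t) :
    natFilt Z s ≤ natFilt Z t := by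
  unfold natFilt
  exact biSup_mono (fun i hi => le_trans hi h)

lemma meas_natFilt {Ω : Type*} (Z : ℝ → Ω → ℝ) (t : ℝ) :
    MeasurableSpace.comap (Z t) inferInstance ≤ natFilt Z t := by
  unfold natFilt
  exact le_biSup (fun s => MeasurableSpace.comap (Z s) inferInstance) (Set.mem_Iic.2 (le_refl t))

lemma natFilt_le {Ω : Type} {m0 : MeasurableSpace Ω} (P : Measure Ω) [IsProbabilityMeasure P]
    {E : Set ℝ} {b σ : ℝ → ℝ → ℝ} {Z : ℝ → Ω → ℝ} {s z : ℝ} (hs : s < 1)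
    (hz : ∀ᵐ ω ∂P, Z s ω = z) (h : RefDiffusion P E b σ Z s) (c : ℝ) : natFilt Z c ≤ m0 := by
  by_contra hn
  have hT : ¬ natFilt Z (max c s) ≤ m0 := fun h' => hn ((natFilt_mono Z (le_max_left _ _)).trans h')
  obtain ⟨-, -, -, h4⟩ := h
  let f : ContDiffBump z := ⟨1, 2, by norm_num, by norm_num⟩
  obtain ⟨-, -, hm⟩ := h4 f f.contDiff f.hasCompactSupport
  have h1 := hm (max c s) (max c s) le_rfl
  rw [condExp_of_not_le hT] at h1
  have h2 := hm s (max c s) (le_max_right _ _)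
  have h3 := (condExp_congr_ae (m := natFilt Z s) h1.symm).symm.trans h2
  rw [condExp_zero] at h3
  have h5 : ∀ᵐ ω ∂P, False := by
    filter_upwards [h3, hz] with ω h3 hzω
    have e : max s (min s 1) = s := by rw [min_eq_left hs.le, max_self]
    rw [e, hzω] at h3
    have : f z = 1 := f.one_of_mem_closedBall (by simp [f])
    simp [this] at h3
  rw [ae_iff] at h5
  simp at h5

theorem exists_FP {ℓ : EReal} {E : Set ℝ} (hE : E = {x : ℝ | ℓ < (x : EReal)})
    {b σ : ℝ → ℝ → ℝ} (hA1 : A1 E b σ) {s z : ℝ} (hs : s ∈ Ico (0:ℝ) 1)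
    {Ω : Type} {m0 : MeasurableSpace Ω} {P : Measure Ω} {Z : ℝ → Ω → ℝ}
    (hP : IsProbabilityMeasure P) (hz : ∀ᵐ ω ∂P, Z s ω = z)
    (h : RefDiffusion P E b σ Z s) :
    ∃ μ : Kernel ℝ ℝ, FP E b σ s z μ ∧ ∀ t, P.map (Z t) = μ t := by
  have hEo := E_isOpen hE
  have hle := natFilt_le P hs.2 hz h
  have hZm : ∀ t, Measurable (Z t) := fun t =>
    measurable_iff_comap_le.2 ((meas_natFilt Z t).trans (hle t))
  obtain ⟨-, hcont, -, hmart⟩ := h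
  -- regularised version
  set N : Set Ω := toMeasurable P {ω | ¬ Continuous fun t => Z t ω} with hN
  have hN0 : P N = 0 := by
    rw [hN, measure_toMeasurable]
    exact hcont
  have hNm : MeasurableSet N := measurableSet_toMeasurable _ _
  let X : ℝ → Ω → ℝ := fun t => Nᶜ.indicator (Z t)
  have hXm : ∀ t, Measurable (X t) := fun t => (hZm t).indicator hNm.compl
  have hXc : ∀ ω, Continuous fun t => X t ω := by
    intro ω
    by_cases hω : ω ∈ N
    · have : (fun t => X t ω) = fun _ => 0 := by
        funext t
        exact Set.indicator_of_notMem (by simpa using hω) _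
      rw [this]
      exact continuous_const
    · have : (fun t => X t ω) = fun t => Z t ω := by
        funext t
        exact Set.indicator_of_mem (by simpa using hω) _
      rw [this]
      by_contra hc
      exact hω (subset_toMeasurable P _ hc)
  have hXZ : ∀ᵐ ω ∂P, ∀ t, X t ω = Z t ω := by
    have : ∀ᵐ ω ∂P, ω ∈ Nᶜ := by
      rw [ae_iff]
      simpa using hN0
    filter_upwards [this] with ω hω t
    exact Set.indicator_of_mem hω _
  have hXu : Measurable (Function.uncurry X) :=
    measurable_uncurry_of_continuous_of_measurable hXc hXm
  have hmap : ∀ t, P.map (Z t) = P.map (X t) := fun t =>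
    Measure.map_congr (hXZ.mono fun ω hω => (hω t).symm)
  let μ : Kernel ℝ ℝ :=
    { toFun := fun t => P.map (X t)
      measurable' := by
        refine Measure.measurable_of_measurable_coe _ fun A hA => ?_
        have : (fun t => P.map (X t) A) = fun t => P (Prod.mk t ⁻¹' (Function.uncurry X ⁻¹' A)) := by
          funext t
          rw [Measure.map_apply (hXm t) hA]
          rfl
        rw [this]
        exact measurable_measure_prodMk_left (hXu hA) }
  have hμ : ∀ t, μ t = P.map (X t) := fun t => rfl
  refine ⟨μ, ⟨⟨fun t => ?_⟩, ?_, ?_⟩, fun t => by rw [hmap, hμ]⟩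
  · rw [hμ]
    exact Measure.isProbabilityMeasure_map (hXm t).aemeasurable
  · rw [hμ, ← hmap, Measure.map_congr (g := fun _ => z) hz]
    simp
  · intro f hf hfc c₁ c₂ h1 h12 h2
    obtain ⟨C, hC⟩ := hA1.bounded
    obtain ⟨K, hK⟩ := hA1.lipschitz
    obtain ⟨K', γ, hγ, hK'⟩ := hA1.holder
    have hbm : Measurable (Function.uncurry (tb E b)) := tb_measurable hEo hγ
      (fun t ht z hz z' hz' => (hK t ht z hz z' hz').1)
      (fun z hz t ht t' ht' => (hK' z hz t ht t' ht').1)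
    have hσm : Measurable (Function.uncurry (tb E σ)) := tb_measurable hEo hγ
      (fun t ht z hz z' hz' => (hK t ht z hz z' hz').2)
      (fun z hz t ht t' ht' => (hK' z hz t ht t' ht').2)
    have hbb : ∀ u x, |tb E b u x| ≤ |C| := tb_abs_le (abs_nonneg _)
      fun t ht z hz => ((hC t ht z hz).1).trans (le_abs_self _)
    have hσb : ∀ u x, |tb E σ u x| ≤ |C| := tb_abs_le (abs_nonneg _)
      fun t ht z hz => ((hC t ht z hz).2).trans (le_abs_self _)
    have hf1 : ContDiff ℝ 1 (deriv f) := by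
      have : ContDiff ℝ (1 + 1) f := by rw [one_add_one_eq_two]; exact hf
      exact (contDiff_succ_iff_deriv.1 this).2.2
    have hd1 : Continuous (deriv f) := hf1.continuous
    have hd2 : Continuous (deriv (deriv f)) := (contDiff_one_iff_deriv.1 hf1).2
    obtain ⟨B0, hB0⟩ := hfc.exists_bound_of_continuous hf.continuous
    obtain ⟨B1, hB1⟩ := hfc.deriv.exists_bound_of_continuous hd1
    obtain ⟨B2, hB2⟩ := hfc.deriv.deriv.exists_bound_of_continuous hd2
    set G : ℝ → ℝ → ℝ := fun u x =>
      tb E b u x * deriv f x + tb E σ u x ^ 2 / 2 * deriv (deriv f) x with hG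
    have hGm : Measurable (Function.uncurry G) := by
      have e1 : Measurable fun p : ℝ × ℝ => deriv f p.2 := hd1.measurable.comp measurable_snd
      have e2 : Measurable fun p : ℝ × ℝ => deriv (deriv f) p.2 :=
        hd2.measurable.comp measurable_snd
      exact (hbm.mul e1).add (((hσm.pow_const 2).div_const 2).mul e2)
    have hGb : ∀ u x, |G u x| ≤ |C| * B1 + |C| ^ 2 / 2 * B2 := by
      intro u x
      have e1 := hB1 x
      have e2 := hB2 x
      rw [Real.norm_eq_abs] at e1 e2
      refine (abs_add_le _ _).trans (add_le_add ?_ ?_)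
      · rw [abs_mul]
        exact mul_le_mul (hbb u x) e1 (abs_nonneg _) (abs_nonneg _)
      · rw [abs_mul]
        refine mul_le_mul ?_ e2 (abs_nonneg _) (by positivity)
        rw [abs_div, abs_pow]
        have := pow_le_pow_left₀ (abs_nonneg _) (hσb u x) 2
        rw [abs_of_pos (by norm_num : (0:ℝ) < 2)]
        linarith
    have hGX : Measurable (fun p : ℝ × Ω => G p.1 (X p.1 p.2)) :=
      hGm.comp (measurable_fst.prodMk hXu)
    -- interval integrability along paths
    have hii : ∀ ω a c, IntervalIntegrable (fun u => G u (X u ω)) volume a c := by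
      intro ω a c
      have hm : Measurable fun u => G u (X u ω) := hGX.comp (measurable_id.prodMk measurable_const)
      refine (intervalIntegrable_const (c := |C| * B1 + |C| ^ 2 / 2 * B2)).mono_fun
        hm.aestronglyMeasurable (Eventually.of_forall fun u => ?_)
      simp only [Real.norm_eq_abs]
      exact (hGb _ _).trans (le_abs_self _)
    obtain ⟨-, hint, hcond⟩ := hmart f hf hfc
    have hexp := hcond c₁ c₂ h12
    have hEq := integral_congr_ae hexp
    rw [integral_condExp (hle c₁)] at hEq
    have hm1 : max s (min c₁ 1) = c₁ := by rw [min_eq_left (h12.trans h2), max_eq_right h1]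
    have hm2 : max s (min c₂ 1) = c₂ := by rw [min_eq_left h2, max_eq_right (h1.trans h12)]
    -- rewrite the compensator
    have hcomp : ∀ c, s ≤ c → c ≤ 1 → ∀ᵐ ω ∂P, (∫ u in s..c,
          Set.indicator E (fun x => b u (Z u ω) * deriv f x +
            σ u (Z u ω) ^ 2 / 2 * deriv (deriv f) x) (Z u ω)) = ∫ u in s..c, G u (X u ω) := by
      intro c hsc hc1
      filter_upwards [hXZ] with ω hω
      refine intervalIntegral.integral_congr fun u hu => ?_
      rw [uIcc_of_le hsc] at hu
      have hu' : u ∈ Icc (0:ℝ) 1 := ⟨hs.1.trans hu.1, hu.2.trans hc1⟩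
      simp only [hG]
      rw [hω u]
      by_cases hE' : Z u ω ∈ E
      · rw [Set.indicator_of_mem hE', tb_of_mem hu' hE', tb_of_mem hu' hE']
      · rw [Set.indicator_of_notMem hE', tb_of_notMem hE', tb_of_notMem hE']
        simp
    have hFint : ∀ c, Integrable (fun ω => f (X c ω)) P := by
      intro c
      refine Integrable.of_bound (hf.continuous.measurable.comp (hXm c)).aestronglyMeasurable B0
        (Eventually.of_forall fun ω => hB0 _)
    have hIm : ∀ a c, Integrable (fun ω => ∫ u in a..c, G u (X u ω)) P := by
      intro a c
      refine Integrable.of_bound ?_ ((|C| * B1 + |C| ^ 2 / 2 * B2) * |c - a|)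
        (Eventually.of_forall fun ω => ?_)
      · have hsm : StronglyMeasurable (fun p : Ω × ℝ => G p.2 (X p.2 p.1)) :=
          (hGX.comp measurable_swap).stronglyMeasurable
        simp only [intervalIntegral]
        exact (hsm.integral_prod_right'.sub hsm.integral_prod_right').aestronglyMeasurable
      · exact intervalIntegral.norm_integral_le_of_norm_le_const fun u _ => hGb _ _
    have key : ∀ c, s ≤ c → c ≤ 1 → max s (min c 1) = c → ∫ ω, (f (Z (max s (min c 1)) ω) -
        ∫ u in s..(max s (min c 1)),
          Set.indicator E (fun x => b u (Z u ω) * deriv f x +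
            σ u (Z u ω) ^ 2 / 2 * deriv (deriv f) x) (Z u ω)) ∂P =
        ∫ ω, f (X c ω) ∂P - ∫ ω, (∫ u in s..c, G u (X u ω)) ∂P := by
      intro c hsc hc1 hm
      rw [hm, ← integral_sub (hFint c) (hIm s c)]
      refine integral_congr_ae ?_
      filter_upwards [hcomp c hsc hc1, hXZ] with ω h1 h2
      rw [h1, h2 c]
    rw [key c₂ (h1.trans h12) h2 hm2, key c₁ h1 (h12.trans h2) hm1] at hEq
    have hmapf : ∀ c, ∫ x, f x ∂(μ c) = ∫ ω, f (X c ω) ∂P := by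
      intro c
      rw [hμ, integral_map (hXm c).aemeasurable hf.continuous.aestronglyMeasurable]
    have hmapG : ∀ u, ∫ x, G u x ∂(μ u) = ∫ ω, G u (X u ω) ∂P := by
      intro c
      rw [hμ, integral_map (hXm c).aemeasurable]
      exact (hGm.comp (measurable_const.prodMk measurable_id)).aestronglyMeasurable
    rw [hmapf, hmapf]
    change _ = ∫ u in c₁..c₂, ∫ x, G u x ∂(μ u)
    simp_rw [hmapG]
    have hsub : ∫ ω, (∫ u in s..c₂, G u (X u ω)) ∂P - ∫ ω, (∫ u in s..c₁, G u (X u ω)) ∂P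
        = ∫ ω, (∫ u in c₁..c₂, G u (X u ω)) ∂P := by
      rw [← integral_sub (hIm _ _) (hIm _ _)]
      refine integral_congr_ae (Eventually.of_forall fun ω => ?_)
      exact intervalIntegral.integral_interval_sub_left (hii ω _ _) (hii ω _ _)
    have hswap : ∫ u in c₁..c₂, ∫ ω, G u (X u ω) ∂P = ∫ ω, (∫ u in c₁..c₂, G u (X u ω)) ∂P := by
      refine intervalIntegral_integral_swap (f := fun u ω => G u (X u ω)) ?_
      have : IsFiniteMeasure ((volume : Measure ℝ).restrict (uIoc c₁ c₂)) :=
        ⟨by rw [Measure.restrict_apply_univ, uIoc_of_le h12]; exact measure_Ioc_lt_top⟩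
      refine Integrable.of_bound hGX.aestronglyMeasurable (|C| * B1 + |C| ^ 2 / 2 * B2)
        (Eventually.of_forall fun p => hGb _ _)
    rw [hswap, ← hsub]
    linarith

/-! ### Part 2: the truncated distance function -/

lemma hasDerivAt_maxpow (n : ℕ) (x : ℝ) :
    HasDerivAt (fun x : ℝ => max 0 x ^ (n + 2)) ((n + 2) * max 0 x ^ (n + 1)) x := by
  rcases lt_trichotomy x 0 with hx | hx | hx
  · have h1 : (fun x : ℝ => max 0 x ^ (n + 2)) =ᶠ[𝓝 x] fun _ => 0 := by
      filter_upwards [Iio_mem_nhds hx] with w hw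
      rw [max_eq_left (le_of_lt hw)]
      simp
    rw [max_eq_left hx.le]
    simpa using (hasDerivAt_const x (0:ℝ)).congr_of_eventuallyEq h1
  · subst hx
    simp only [max_self, ne_eq, Nat.add_eq_zero_iff, one_ne_zero, and_false, not_false_eq_true,
      zero_pow, mul_zero]
    rw [hasDerivAt_iff_isLittleO_nhds_zero]
    simp only [zero_add, max_self, ne_eq, Nat.add_eq_zero_iff, OfNat.ofNat_ne_zero, and_false,
      not_false_eq_true, zero_pow, sub_zero, smul_zero]
    have h1 : (fun h : ℝ => max 0 h ^ (n + 2)) =O[𝓝 0] fun h => h ^ (n + 2) := by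
      refine Asymptotics.isBigO_of_le _ fun h => ?_
      rw [norm_pow, norm_pow]
      refine pow_le_pow_left₀ (norm_nonneg _) ?_ _
      rw [Real.norm_eq_abs, Real.norm_eq_abs, abs_of_nonneg (le_max_left _ _)]
      exact max_le (abs_nonneg _) (le_abs_self _)
    have h2 : (fun h : ℝ => h ^ (n + 2)) =o[𝓝 0] fun h : ℝ => h := by
      simpa using Asymptotics.isLittleO_pow_pow (𝕜 := ℝ) (show 1 < n + 2 by omega)
    exact h1.trans_isLittleO h2
  · have h1 : (fun x : ℝ => max 0 x ^ (n + 2)) =ᶠ[𝓝 x] fun x => x ^ (n + 2) := by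
      filter_upwards [Ioi_mem_nhds hx] with w hw
      rw [max_eq_right (le_of_lt hw)]
    rw [max_eq_right hx.le]
    have := (hasDerivAt_pow (n + 2) x).congr_of_eventuallyEq h1
    simpa using this

def vv (R w : ℝ) : ℝ := max 0 (1 - |w| / R)

lemma vv_nonneg (R w : ℝ) : 0 ≤ vv R w := le_max_left _ _

lemma vv_le_one {R : ℝ} (hR : 0 < R) (w : ℝ) : vv R w ≤ 1 :=
  max_le zero_le_one (by have : 0 ≤ |w| / R := by positivity
                         linarith)

lemma vv_zero (R : ℝ) : vv R 0 = 1 := by simp [vv]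

lemma vv_mul {R : ℝ} (hR : 0 < R) (w : ℝ) : vv R w * |w| = vv R w * (R * (1 - vv R w)) := by
  unfold vv
  rcases le_total 0 (1 - |w| / R) with h | h
  · rw [max_eq_right h]
    field_simp
    ring
  · rw [max_eq_left h]
    simp

lemma vv_continuous (R : ℝ) : Continuous (vv R) := by
  unfold vv
  fun_prop

lemma vv_hasDerivAt {R : ℝ} (n : ℕ) {w : ℝ} (hw : w ≠ 0) :
    HasDerivAt (fun w => vv R w ^ (n + 2))
      ((n + 2) * vv R w ^ (n + 1) * (-(SignType.sign w : ℝ) / R)) w := by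
  have h1 : HasDerivAt (fun w : ℝ => 1 - |w| / R) (-(SignType.sign w : ℝ) / R) w := by
    have := ((hasDerivAt_abs hw).div_const R).const_sub 1
    exact this.congr_deriv (by ring)
  exact (hasDerivAt_maxpow n (1 - |w| / R)).comp w h1

lemma hasDerivAt_id_mul {G : ℝ → ℝ} (hG : ContinuousAt G 0) :
    HasDerivAt (fun w => w * G w) (G 0) 0 := by
  rw [hasDerivAt_iff_tendsto_slope]
  have : Tendsto G (𝓝[≠] 0) (𝓝 (G 0)) := hG.tendsto.mono_left nhdsWithin_le_nhds
  refine this.congr' ?_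
  filter_upwards [self_mem_nhdsWithin] with w hw
  have hw' : w ≠ 0 := hw
  simp [slope_def_field]
  field_simp

def D0 (R w : ℝ) : ℝ := R ^ 2 / 9 * (1 - vv R w ^ 3) ^ 2
def D1 (R w : ℝ) : ℝ := 2 / 3 * (w * (vv R w ^ 2 + vv R w ^ 3 + vv R w ^ 4))
def D2 (R w : ℝ) : ℝ := 2 / 3 * (5 * vv R w ^ 4 - 2 * vv R w)

lemma sign_mul_self' (w : ℝ) : w * (SignType.sign w : ℝ) = |w| := by
  rw [mul_comm]; exact sign_mul_self w

lemma D0_hasDerivAt {R : ℝ} (hR : 0 < R) (w : ℝ) : HasDerivAt (D0 R) (D1 R w) w := by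
  by_cases hw : w = 0
  · subst hw
    have h1 : D0 R =ᶠ[𝓝 0] fun w => w * (w * ((1 + vv R w + vv R w ^ 2) ^ 2 / 9)) := by
      have : ∀ᶠ w : ℝ in 𝓝 0, |w| < R := by
        have : Continuous fun w : ℝ => |w| := continuous_abs
        exact this.tendsto 0 |>.eventually (gt_mem_nhds (by simpa using hR))
      filter_upwards [this] with w hw
      have hv : vv R w = 1 - |w| / R := by
        unfold vv
        refine max_eq_right ?_
        rw [sub_nonneg, div_le_one hR]
        exact hw.le
      have e : |w| = R * (1 - vv R w) := by rw [hv]; field_simp; ring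
      have e2 : w ^ 2 = (R * (1 - vv R w)) ^ 2 := by rw [← e, sq_abs]
      unfold D0
      calc _ = (R * (1 - vv R w)) ^ 2 * ((1 + vv R w + vv R w ^ 2) ^ 2 / 9) := by ring
        _ = _ := by rw [← e2]; ring
    have h2 := (hasDerivAt_id_mul (G := fun w => w * ((1 + vv R w + vv R w ^ 2) ^ 2 / 9))
      (by have := vv_continuous R; fun_prop)).congr_of_eventuallyEq h1
    exact h2.congr_deriv (by simp [D1])
  · have h3 := (((vv_hasDerivAt (R := R) 1 hw).const_sub 1).pow 2).const_mul (R ^ 2 / 9)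
    have h4 : HasDerivAt (D0 R) (R ^ 2 / 9 *
        (2 * (1 - vv R w ^ 3) * (-(3 * vv R w ^ 2 * (-(SignType.sign w : ℝ) / R))))) w :=
      HasDerivAt.congr_deriv h3 (by norm_num)
    refine h4.congr_deriv ?_
    · have hv := vv_mul hR w
      rw [← sign_mul_self' w] at hv
      have hs : (SignType.sign w : ℝ) * (SignType.sign w : ℝ) = 1 := by
        rcases lt_or_gt_of_ne hw with h | h
        · simp [sign_neg h]
        · simp [sign_pos h]
      have hv2 : vv R w * w = vv R w * (R * (1 - vv R w)) * (SignType.sign w : ℝ) := by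
        rw [← hv, mul_assoc, mul_assoc, hs, mul_one]
      unfold D1
      have : 2 / 3 * (w * (vv R w ^ 2 + vv R w ^ 3 + vv R w ^ 4)) =
        2 / 3 * ((vv R w * w) * (vv R w + vv R w ^ 2 + vv R w ^ 3)) := by ring
      rw [this, hv2]
      field_simp
      ring

lemma D1_hasDerivAt {R : ℝ} (hR : 0 < R) (w : ℝ) : HasDerivAt (D1 R) (D2 R w) w := by
  by_cases hw : w = 0
  · subst hw
    have h2 := (hasDerivAt_id_mul (G := fun w => (vv R w ^ 2 + vv R w ^ 3 + vv R w ^ 4))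
      (by have := vv_continuous R; fun_prop)).const_mul (2 / 3)
    exact HasDerivAt.congr_deriv h2 (by norm_num [D2, vv_zero])
  · have h3 := ((hasDerivAt_id w).mul (((vv_hasDerivAt (R := R) 0 hw).add
      (vv_hasDerivAt (R := R) 1 hw)).add (vv_hasDerivAt (R := R) 2 hw))).const_mul (2 / 3)
    have h4 : HasDerivAt (D1 R) (2 / 3 * ((vv R w ^ 2 + vv R w ^ 3 + vv R w ^ 4) +
      w * (2 * vv R w * (-(SignType.sign w : ℝ) / R) + 3 * vv R w ^ 2 * (-(SignType.sign w : ℝ) / R)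
        + 4 * vv R w ^ 3 * (-(SignType.sign w : ℝ) / R)))) w := by
      refine HasDerivAt.congr_deriv h3 ?_
      simp
      norm_num
    refine h4.congr_deriv ?_
    symm
    have hv := vv_mul hR w
    have : 2 / 3 * ((vv R w ^ 2 + vv R w ^ 3 + vv R w ^ 4) +
      w * (2 * vv R w * (-(SignType.sign w : ℝ) / R) + 3 * vv R w ^ 2 * (-(SignType.sign w : ℝ) / R)
        + 4 * vv R w ^ 3 * (-(SignType.sign w : ℝ) / R))) =
      2 / 3 * ((vv R w ^ 2 + vv R w ^ 3 + vv R w ^ 4) - (vv R w * (w * (SignType.sign w : ℝ))) / R *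
       (2 + 3 * vv R w + 4 * vv R w ^ 2)) := by ring
    rw [this, sign_mul_self', hv]
    unfold D2
    field_simp
    ring

/-- The truncated squared distance to `y`. -/
def DD (y R k x : ℝ) : ℝ := D0 R (x - y) / k ^ 2
def DD1 (y R k x : ℝ) : ℝ := D1 R (x - y) / k ^ 2
def DD2 (y R k x : ℝ) : ℝ := D2 R (x - y) / k ^ 2

lemma DD_hasDerivAt (y : ℝ) {R : ℝ} (hR : 0 < R) (k x : ℝ) :
    HasDerivAt (DD y R k) (DD1 y R k x) x := by
  have h := (D0_hasDerivAt hR (x - y)).comp x ((hasDerivAt_id x).sub_const y)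
  exact HasDerivAt.congr_deriv (h.div_const (k ^ 2)) (by simp [DD1, DD2])

lemma DD1_hasDerivAt (y : ℝ) {R : ℝ} (hR : 0 < R) (k x : ℝ) :
    HasDerivAt (DD1 y R k) (DD2 y R k x) x := by
  have h := (D1_hasDerivAt hR (x - y)).comp x ((hasDerivAt_id x).sub_const y)
  exact HasDerivAt.congr_deriv (h.div_const (k ^ 2)) (by simp [DD1, DD2])

lemma DD2_continuous (y R k : ℝ) : Continuous (DD2 y R k) := by
  have := vv_continuous R
  unfold DD2 D2
  fun_prop

lemma DD_deriv (y : ℝ) {R : ℝ} (hR : 0 < R) (k : ℝ) : deriv (DD y R k) = DD1 y R k :=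
  funext fun x => (DD_hasDerivAt y hR k x).deriv

lemma DD1_deriv (y : ℝ) {R : ℝ} (hR : 0 < R) (k : ℝ) : deriv (DD1 y R k) = DD2 y R k :=
  funext fun x => (DD1_hasDerivAt y hR k x).deriv

lemma DD_contDiff (y : ℝ) {R : ℝ} (hR : 0 < R) (k : ℝ) : ContDiff ℝ 2 (DD y R k) := by
  rw [← one_add_one_eq_two, contDiff_succ_iff_deriv, DD_deriv y hR]
  refine ⟨fun x => (DD_hasDerivAt y hR k x).differentiableAt, by simp, ?_⟩
  rw [contDiff_one_iff_deriv, DD1_deriv y hR]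
  exact ⟨fun x => (DD1_hasDerivAt y hR k x).differentiableAt, DD2_continuous _ _ _⟩

lemma DD_nonneg (y R k x : ℝ) : 0 ≤ DD y R k x := by
  unfold DD D0
  positivity

lemma DD_le (y R k x : ℝ) (hR : 0 < R) : DD y R k x ≤ R ^ 2 / 9 / k ^ 2 := by
  unfold DD D0
  have h0 := vv_nonneg R (x - y)
  have h1 := vv_le_one hR (x - y)
  have h3 : vv R (x - y) ^ 3 ≤ 1 := pow_le_one₀ h0 h1
  have h4 : 0 ≤ vv R (x - y) ^ 3 := by positivity
  have : (1 - vv R (x - y) ^ 3) ^ 2 ≤ 1 := by nlinarith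
  have h5 : R ^ 2 / 9 * (1 - vv R (x - y) ^ 3) ^ 2 ≤ R ^ 2 / 9 * 1 :=
    mul_le_mul_of_nonneg_left this (by positivity)
  rw [mul_one] at h5
  exact div_le_div_of_nonneg_right h5 (by positivity)

/-- the truncated distance is bounded by the euclidean one -/
lemma DD_le_sq (y R k x : ℝ) (hR : 0 < R) : DD y R k x ≤ (x - y) ^ 2 / k ^ 2 := by
  unfold DD D0
  refine div_le_div_of_nonneg_right ?_ (by positivity)
  have h0 := vv_nonneg R (x - y)
  have h1 := vv_le_one hR (x - y)
  have h2 : 1 - |x - y| / R ≤ vv R (x - y) := le_max_right _ _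
  have h3 : R * (1 - vv R (x - y)) ≤ |x - y| := by
    have : |x - y| = R * (|x - y| / R) := by field_simp
    rw [this]
    exact mul_le_mul_of_nonneg_left (by linarith) hR.le
  have h4 : (R * (1 - vv R (x - y))) ^ 2 ≤ (x - y) ^ 2 := by
    rw [← sq_abs (x - y)]
    exact pow_le_pow_left₀ (mul_nonneg hR.le (by linarith)) h3 2
  have h5 : R ^ 2 / 9 * (1 - vv R (x - y) ^ 3) ^ 2 =
    (R * (1 - vv R (x - y))) ^ 2 * ((1 + vv R (x - y) + vv R (x - y) ^ 2) ^ 2 / 9) := by ring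
  rw [h5]
  have h6 : (1 + vv R (x - y) + vv R (x - y) ^ 2) ^ 2 / 9 ≤ 1 := by
    have : 1 + vv R (x - y) + vv R (x - y) ^ 2 ≤ 3 := by nlinarith
    have : (1 + vv R (x - y) + vv R (x - y) ^ 2) ^ 2 ≤ 3 ^ 2 :=
      pow_le_pow_left₀ (by positivity) this 2
    linarith
  calc _ ≤ (R * (1 - vv R (x - y))) ^ 2 * 1 := mul_le_mul_of_nonneg_left h6 (by positivity)
    _ ≤ _ := by linarith

/-- lower bound away from `y` -/
lemma DD_lower (y R k : ℝ) (hR : 0 < R) (hk : 0 < k) {r : ℝ} (hr : 0 < r) :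
    ∃ c > 0, ∀ x, r ≤ |x - y| → c ≤ DD y R k x := by
  have hr1 : vv R r < 1 := by
    unfold vv
    have : 0 < |r| / R := by positivity
    exact max_lt one_pos (by linarith)
  have hr0 := vv_nonneg R r
  have hr3 : vv R r ^ 3 < 1 := pow_lt_one₀ hr0 hr1 (by norm_num)
  refine ⟨R ^ 2 / 9 * (1 - vv R r ^ 3) ^ 2 / k ^ 2, ?_, fun x hx => ?_⟩
  · have : 0 < 1 - vv R r ^ 3 := by linarith
    positivity
  · unfold DD D0
    have h1 : vv R (x - y) ≤ vv R r := by
      unfold vv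
      refine max_le_max le_rfl ?_
      rw [abs_of_pos hr]
      have := div_le_div_of_nonneg_right hx hR.le
      linarith
    have h2 : vv R (x - y) ^ 3 ≤ vv R r ^ 3 := pow_le_pow_left₀ (vv_nonneg _ _) h1 3
    refine div_le_div_of_nonneg_right ?_ (by positivity)
    refine mul_le_mul_of_nonneg_left ?_ (by positivity)
    exact pow_le_pow_left₀ (by linarith) (by linarith) 2

/-- Outside a ball `DD` is constant. -/
lemma DD_const (y R k x : ℝ) (hR : 0 < R) (hx : R ≤ |x - y|) : DD y R k x = R ^ 2 / 9 / k ^ 2 := by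
  unfold DD D0 vv
  rw [max_eq_left]
  · ring
  · rw [sub_nonpos, one_le_div hR]
    exact hx

/-! ### Part 3: bounds for the coefficients of the truncated distance -/

set_option maxHeartbeats 2000000 in
theorem coef_bounds {E : Set ℝ} {b σ : ℝ → ℝ → ℝ} (hA1 : A1 E b σ) {t y : ℝ}
    (ht : t ∈ Ioc (0:ℝ) 1) (hy : y ∈ E) :
    ∃ R k C γ : ℝ, 0 < R ∧ 0 < k ∧ 0 ≤ C ∧ 0 < γ ∧ γ ≤ 1 / 2 ∧
      ∀ c, 0 ≤ c → c ≤ t → ∀ x ∈ E, 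
        σ c x ^ 2 / 2 * DD1 y R k x ^ 2 ≤ 2 * DD y R k x * (1 + C * (t - c) ^ γ) ∧
        1 - C * ((t - c) ^ γ + √(DD y R k x)) ≤
          b c x * DD1 y R k x + σ c x ^ 2 / 2 * DD2 y R k x ∧
        |b c x * DD1 y R k x + σ c x ^ 2 / 2 * DD2 y R k x| ≤ C ∧
        |σ c x ^ 2 / 2 * DD1 y R k x ^ 2| ≤ C := by
  obtain ⟨C0, hC0⟩ := hA1.bounded
  obtain ⟨σ₀, hσ₀, hell⟩ := hA1.elliptic
  obtain ⟨K, hK⟩ := hA1.lipschitz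
  obtain ⟨K', γ, hγ, hK'⟩ := hA1.holder
  have ht' : t ∈ Icc (0:ℝ) 1 := ⟨ht.1.le, ht.2⟩
  set k := σ t y with hk
  have hkσ : σ₀ ≤ k := hell t ht' y hy
  have hk0 : 0 < k := hσ₀.trans_le hkσ
  set B := |C0| with hB
  have hB0 : 0 ≤ B := abs_nonneg _
  set K1 := |K| + 1 with hK1
  have hK10 : 0 < K1 := by positivity
  set R := σ₀ / K1 with hR
  have hR0 : 0 < R := by positivity
  have hRK : K1 * R = σ₀ := by rw [hR]; field_simp
  set H := |K'| / k with hH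
  have hH0 : 0 ≤ H := by positivity
  set M := 1 + 2 * B / k with hM
  have hM0 : 0 ≤ M := by positivity
  set N := 2 * M + 6 * (B / k) ^ 2 + 2 * B * R / k ^ 2 with hN
  have hN0 : 0 ≤ N := by positivity
  set C1 := 2 * H + H ^ 2 with hC1
  have hC10 : 0 ≤ C1 := by positivity
  set C2 := N * (3 * k / R) with hC2
  have hC20 : 0 ≤ C2 := by positivity
  set C3 := 2 * B * R / k ^ 2 + 3 * (B / k) ^ 2 with hC3
  have hC30 : 0 ≤ C3 := by positivity
  set C4 := 2 * (B / k) ^ 2 * (R ^ 2 / 9 / k ^ 2) with hC4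
  have hC40 : 0 ≤ C4 := by positivity
  refine ⟨R, k, C1 + C2 + C3 + C4, min γ (1 / 2), hR0, hk0, by positivity,
    lt_min hγ (by norm_num), min_le_right _ _, fun c hc0 hct x hx => ?_⟩
  have hc : c ∈ Icc (0:ℝ) 1 := ⟨hc0, hct.trans ht.2⟩
  set θ := (t - c) ^ (min γ (1 / 2)) with hθ
  have htc0 : 0 ≤ t - c := by linarith
  have htc1 : t - c ≤ 1 := by linarith [ht.2]
  have hθ0 : 0 ≤ θ := Real.rpow_nonneg htc0 _
  have hθ1 : θ ≤ 1 := Real.rpow_le_one htc0 htc1 (le_min hγ.le (by norm_num))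
  have hθγ : (t - c) ^ γ ≤ θ := by
    rcases htc0.eq_or_lt with h | h
    · rw [hθ, ← h, Real.zero_rpow hγ.ne']
      exact Real.rpow_nonneg le_rfl _
    · exact Real.rpow_le_rpow_of_exponent_ge h htc1 (min_le_left _ _)
  set v := vv R (x - y) with hv
  have hv0 : 0 ≤ v := vv_nonneg _ _
  have hv1 : v ≤ 1 := vv_le_one hR0 _
  have hvw : v * |x - y| = v * (R * (1 - v)) := vv_mul hR0 _
  set S := σ c x / k with hS
  have hσpos : 0 < σ c x := hσ₀.trans_le (hell c hc x hx)
  have hS0 : 0 ≤ S := by positivity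
  have hσB : σ c x ≤ B := (le_abs_self _).trans (((hC0 c hc x hx).2).trans (le_abs_self _))
  have hbB : |b c x| ≤ B := ((hC0 c hc x hx).1).trans (le_abs_self _)
  have hSB : S ≤ B / k := div_le_div_of_nonneg_right hσB hk0.le
  have hσS : σ c x = S * k := by rw [hS]; field_simp
  -- time regularity
  have htime : |σ c x - σ t x| ≤ |K'| * θ := by
    have h1 := (hK' x hx t ht' c hc).2
    rw [abs_sub_comm, abs_of_nonneg htc0] at h1
    exact h1.trans ((mul_le_mul_of_nonneg_right (le_abs_self _) (Real.rpow_nonneg htc0 _)).trans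
      (mul_le_mul_of_nonneg_left hθγ (abs_nonneg _)))
  have hspace : |σ t x - k| ≤ K1 * |x - y| := by
    have h1 := (hK t ht' x hx y hy).2
    refine h1.trans (mul_le_mul_of_nonneg_right ?_ (abs_nonneg _))
    rw [hK1]
    linarith [le_abs_self K]
  have hspace2 : |σ t x - k| ≤ M * k * (1 - v) := by
    have hMk : M * k = k + 2 * B := by rw [hM]; field_simp
    rw [hMk]
    rcases le_total (|x - y|) R with h | h
    · have hv' : v = 1 - |x - y| / R := by
        rw [hv, vv]
        refine max_eq_right ?_
        rw [sub_nonneg, div_le_one hR0]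
        exact h
      have e : |x - y| = R * (1 - v) := by rw [hv']; field_simp; ring
      rw [e, ← mul_assoc, hRK] at hspace
      have h1 := mul_le_mul_of_nonneg_right hkσ (sub_nonneg.2 hv1)
      have h2 := mul_nonneg hB0 (sub_nonneg.2 hv1)
      linarith only [hspace, h1, h2]
    · have hv' : v = 0 := by
        rw [hv, vv]
        refine max_eq_left ?_
        rw [sub_nonpos, one_le_div hR0]
        exact h
      rw [hv']
      have h1 : |σ t x| ≤ B := ((hC0 t ht' x hx).2).trans (le_abs_self _)
      have h2 : |k| ≤ B := ((hC0 t ht' y hy).2).trans (le_abs_self _)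
      have := abs_sub (σ t x) k
      linarith
  have hHk : |K'| = H * k := by rw [hH]; field_simp
  have hSv : S * v ^ 2 ≤ 1 + H * θ := by
    have h1 : σ c x ≤ k + K1 * |x - y| + H * k * θ := by
      rw [← hHk]
      have := abs_le.1 htime
      have := abs_le.1 hspace
      linarith
    have h2 : σ c x * v ^ 2 ≤ (k + K1 * |x - y| + H * k * θ) * v ^ 2 :=
      mul_le_mul_of_nonneg_right h1 (by positivity)
    have h3 : (k + K1 * |x - y| + H * k * θ) * v ^ 2 =
        k * v ^ 2 + (K1 * R) * (v ^ 2 * (1 - v)) + H * k * θ * v ^ 2 := by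
      have : v ^ 2 * |x - y| = v ^ 2 * (R * (1 - v)) := by
        rw [pow_two, mul_assoc, hvw]; ring
      linear_combination K1 * this
    rw [h3, hRK] at h2
    have h4 : σ₀ * (v ^ 2 * (1 - v)) ≤ k * (v ^ 2 * (1 - v)) :=
      mul_le_mul_of_nonneg_right hkσ (mul_nonneg (by positivity) (by linarith))
    have h5 : v ^ 2 + v ^ 2 * (1 - v) ≤ 1 := by
      have e : 1 - (v ^ 2 + v ^ 2 * (1 - v)) = (1 - v) * (1 + v * (1 - v)) := by ring
      have h8 : 0 ≤ (1 - v) * (1 + v * (1 - v)) :=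
        mul_nonneg (sub_nonneg.2 hv1) (add_nonneg zero_le_one (mul_nonneg hv0 (sub_nonneg.2 hv1)))
      linarith only [e, h8]
    have h9 := mul_le_mul_of_nonneg_left h5 hk0.le
    have h6 : H * k * θ * v ^ 2 ≤ H * k * θ * 1 :=
      mul_le_mul_of_nonneg_left (pow_le_one₀ hv0 hv1) (by positivity)
    have h7 : S * v ^ 2 * k ≤ (1 + H * θ) * k := by
      rw [hσS] at h2
      linarith only [h2, h4, h6, h9]
    exact le_of_mul_le_mul_right h7 hk0
  have hQ : σ c x ^ 2 / 2 * DD1 y R k x ^ 2 = 2 * (S * v ^ 2) ^ 2 * DD y R k x := by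
    have h1 : D1 R (x - y) ^ 2 = 4 * v ^ 4 * D0 R (x - y) := by
      unfold D1 D0
      rw [← hv]
      have : (v * (x - y)) ^ 2 = (v * (R * (1 - v))) ^ 2 := by
        rw [← hvw, mul_pow, mul_pow, sq_abs]
      linear_combination (4 / 9 * v ^ 2 * (1 + v + v ^ 2) ^ 2) * this
    unfold DD1 DD
    rw [div_pow, h1, hσS]
    field_simp
    ring
  have hDD0 := DD_nonneg y R k x
  have hDDle := DD_le y R k x hR0
  have hSv0 : 0 ≤ S * v ^ 2 := by positivity
  have hQ1 : (S * v ^ 2) ^ 2 ≤ 1 + C1 * θ := by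
    have h1 := pow_le_pow_left₀ hSv0 hSv 2
    have h2 : θ * θ ≤ θ := by linarith only [mul_le_mul_of_nonneg_left hθ1 hθ0]
    rw [hC1]
    linarith only [mul_le_mul_of_nonneg_left h2 (sq_nonneg H), h1]
  have hQ2 : (S * v ^ 2) ^ 2 ≤ (B / k) ^ 2 := by
    refine pow_le_pow_left₀ hSv0 ?_ 2
    calc S * v ^ 2 ≤ S * 1 := mul_le_mul_of_nonneg_left (pow_le_one₀ hv0 hv1) hS0
      _ ≤ B / k := by linarith
  have hbD : |b c x * DD1 y R k x| ≤ 2 * B * R / k ^ 2 * (1 - v) := by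
    have h1 : |D1 R (x - y)| ≤ 2 * R * (1 - v) := by
      unfold D1
      rw [← hv, abs_mul, abs_mul, abs_of_nonneg (by positivity : 0 ≤ v ^ 2 + v ^ 3 + v ^ 4),
        abs_of_pos (by norm_num : (0:ℝ) < 2 / 3)]
      have e : |x - y| * (v ^ 2 + v ^ 3 + v ^ 4) = R * (1 - v) * (v ^ 2 + v ^ 3 + v ^ 4) := by
        linear_combination (v + v ^ 2 + v ^ 3) * hvw
      rw [e]
      have h3 : v ^ 2 + v ^ 3 + v ^ 4 ≤ 3 := by
        have := pow_le_one₀ (n := 2) hv0 hv1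
        have := pow_le_one₀ (n := 3) hv0 hv1
        have := pow_le_one₀ (n := 4) hv0 hv1
        linarith
      have := mul_le_mul_of_nonneg_left h3 (mul_nonneg hR0.le (sub_nonneg.2 hv1))
      linarith
    unfold DD1
    rw [abs_mul, abs_div, abs_of_pos (by positivity : 0 < k ^ 2)]
    calc |b c x| * (|D1 R (x - y)| / k ^ 2) ≤ B * (2 * R * (1 - v) / k ^ 2) := by
          gcongr
      _ = _ := by ring
  have hσD : σ c x ^ 2 / 2 * DD2 y R k x = S ^ 2 * ((5 * v ^ 4 - 2 * v) / 3) := by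
    unfold DD2 D2
    rw [← hv, hσS]
    field_simp
  have hS2 : S ^ 2 ≤ (B / k) ^ 2 := pow_le_pow_left₀ hS0 hSB 2
  have h1v : 0 ≤ 1 - v := by linarith
  have hG : 1 - 6 * (1 - v) ≤ (5 * v ^ 4 - 2 * v) / 3 := by
    have e : 3 + 2 * v - 5 * v ^ 4 = (1 - v) * (3 + 5 * v + 5 * v ^ 2 + 5 * v ^ 3) := by ring
    have h2 : 3 + 5 * v + 5 * v ^ 2 + 5 * v ^ 3 ≤ 18 := by
      have := pow_le_one₀ (n := 2) hv0 hv1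
      have := pow_le_one₀ (n := 3) hv0 hv1
      linarith
    have := mul_le_mul_of_nonneg_left h2 h1v
    linarith
  have hGabs : |(5 * v ^ 4 - 2 * v) / 3| ≤ 3 := by
    have := pow_le_one₀ (n := 4) hv0 hv1
    have : 0 ≤ v ^ 4 := by positivity
    rw [abs_le]
    constructor <;> linarith
  have hS1 : 1 - (H * θ + M * (1 - v)) ≤ S := by
    have h1 : k - (H * k * θ + M * k * (1 - v)) ≤ σ c x := by
      rw [← hHk]
      have := abs_le.1 htime
      have := abs_le.1 hspace2
      linarith
    rw [hσS] at h1
    refine le_of_mul_le_mul_right ?_ hk0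
    linarith
  have hsqrt : N * (1 - v) ≤ C2 * √(DD y R k x) := by
    have e : √(DD y R k x) = R / 3 * (1 - v ^ 3) / k := by
      have : DD y R k x = (R / 3 * (1 - v ^ 3) / k) ^ 2 := by
        unfold DD D0
        rw [← hv]
        field_simp
        ring
      rw [this, Real.sqrt_sq]
      have : v ^ 3 ≤ 1 := pow_le_one₀ hv0 hv1
      exact div_nonneg (mul_nonneg (by positivity) (by linarith)) hk0.le
    rw [e, hC2]
    have e2 : N * (3 * k / R) * (R / 3 * (1 - v ^ 3) / k) = N * (1 - v ^ 3) := by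
      field_simp
    rw [e2]
    refine mul_le_mul_of_nonneg_left ?_ hN0
    have : v ^ 3 ≤ v := by
      calc v ^ 3 = v * v ^ 2 := by ring
        _ ≤ v * 1 := mul_le_mul_of_nonneg_left (pow_le_one₀ hv0 hv1) hv0
        _ = v := mul_one v
    linarith
  have hsq0 := Real.sqrt_nonneg (DD y R k x)
  refine ⟨?_, ?_, ?_, ?_⟩
  · rw [hQ]
    have h2 : 1 + C1 * θ ≤ 1 + (C1 + C2 + C3 + C4) * θ := by
      have : C1 * θ ≤ (C1 + C2 + C3 + C4) * θ := mul_le_mul_of_nonneg_right (by linarith) hθ0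
      linarith
    have := mul_le_mul_of_nonneg_left (hQ1.trans h2) (by positivity : 0 ≤ 2 * DD y R k x)
    linarith
  · rw [hσD]
    have h2 : S ^ 2 * (1 - 6 * (1 - v)) ≤ S ^ 2 * ((5 * v ^ 4 - 2 * v) / 3) :=
      mul_le_mul_of_nonneg_left hG (by positivity)
    have h3 : 1 + 2 * (S - 1) ≤ S ^ 2 := by linarith only [sq_nonneg (S - 1)]
    have h4 := mul_le_mul_of_nonneg_right hS2 h1v
    have h5 := (abs_le.1 hbD).1
    have h6 : 1 - 2 * H * θ - N * (1 - v) ≤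
        b c x * DD1 y R k x + S ^ 2 * ((5 * v ^ 4 - 2 * v) / 3) := by
      rw [hN]
      linarith only [h2, h3, h4, h5, hS1]
    have h7 : 2 * H * θ ≤ (C1 + C2 + C3 + C4) * θ := by
      refine mul_le_mul_of_nonneg_right ?_ hθ0
      have : 2 * H ≤ C1 := by rw [hC1]; linarith only [sq_nonneg H]
      linarith
    have h8 : C2 * √(DD y R k x) ≤ (C1 + C2 + C3 + C4) * √(DD y R k x) :=
      mul_le_mul_of_nonneg_right (by linarith) hsq0
    linarith
  · rw [hσD]
    have h2 : |S ^ 2 * ((5 * v ^ 4 - 2 * v) / 3)| ≤ (B / k) ^ 2 * 3 := by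
      rw [abs_mul, abs_of_nonneg (sq_nonneg S)]
      exact mul_le_mul hS2 hGabs (abs_nonneg _) (by positivity)
    have h3 : 2 * B * R / k ^ 2 * (1 - v) ≤ 2 * B * R / k ^ 2 * 1 :=
      mul_le_mul_of_nonneg_left (by linarith) (by positivity)
    have := abs_add_le (b c x * DD1 y R k x) (S ^ 2 * ((5 * v ^ 4 - 2 * v) / 3))
    linarith
  · rw [hQ, abs_of_nonneg (by positivity)]
    have : 2 * (S * v ^ 2) ^ 2 * DD y R k x ≤ C4 := by
      rw [hC4]
      exact mul_le_mul (by linarith) hDDle hDD0 (by positivity)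
    linarith

/-! ### Part 4: the explicit supersolution -/

def hh (C γ τ : ℝ) : ℝ := (τ * (2 + 3 * C * τ ^ γ))⁻¹
def aa (C γ τ : ℝ) : ℝ := -(1 / 2) * Real.log τ + 2 * C / γ * τ ^ γ
def ha (C γ τ : ℝ) : ℝ := -(2 + 3 * C * (1 + γ) * τ ^ γ) * hh C γ τ ^ 2
def a1 (C γ τ : ℝ) : ℝ := -(1 / (2 * τ)) + 2 * C * (τ ^ γ / τ)

lemma kk_pos {C γ τ : ℝ} (hC : 0 ≤ C) (hτ : 0 < τ) : 0 < τ * (2 + 3 * C * τ ^ γ) := by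
  have := Real.rpow_nonneg hτ.le γ
  positivity

lemma hh_hasDerivAt {C γ τ : ℝ} (hC : 0 ≤ C) (hτ : 0 < τ) :
    HasDerivAt (hh C γ) (ha C γ τ) τ := by
  have h0 := kk_pos (γ := γ) hC hτ
  have h1 : HasDerivAt (fun s : ℝ => s ^ γ) (γ * τ ^ (γ - 1)) τ :=
    Real.hasDerivAt_rpow_const (Or.inl hτ.ne')
  have h2 := ((hasDerivAt_id τ).mul ((h1.const_mul (3 * C)).const_add 2)).inv h0.ne'
  refine HasDerivAt.congr_deriv h2 ?_
  simp only [id, Pi.mul_apply, ha, hh]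
  rw [Real.rpow_sub_one hτ.ne']
  have h4 : 2 + 3 * C * τ ^ γ ≠ 0 := by
    intro h; rw [h] at h0; simp at h0
  field_simp
  ring

lemma aa_hasDerivAt {C γ τ : ℝ} (hγ : 0 < γ) (hτ : 0 < τ) :
    HasDerivAt (aa C γ) (a1 C γ τ) τ := by
  have h1 : HasDerivAt (fun s : ℝ => s ^ γ) (γ * τ ^ (γ - 1)) τ :=
    Real.hasDerivAt_rpow_const (Or.inl hτ.ne')
  have h2 := ((Real.hasDerivAt_log hτ.ne').const_mul (-(1 / 2))).add (h1.const_mul (2 * C / γ))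
  refine HasDerivAt.congr_deriv h2 ?_
  simp only [a1]
  rw [Real.rpow_sub_one hτ.ne']
  field_simp

lemma hh_pos {C γ τ : ℝ} (hC : 0 ≤ C) (hτ : 0 < τ) : 0 < hh C γ τ :=
  inv_pos.2 (kk_pos hC hτ)

lemma hh_le {C γ τ : ℝ} (hC : 0 ≤ C) (hτ : 0 < τ) : hh C γ τ ≤ 1 / (2 * τ) := by
  have := Real.rpow_nonneg hτ.le γ
  rw [hh, one_div]
  refine inv_anti₀ (by positivity) ?_
  have : 0 ≤ τ * (3 * C * τ ^ γ) := by positivity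
  linarith

lemma hh_ge {C γ τ : ℝ} (hC : 0 ≤ C) (hγ : 0 < γ) (hτ : 0 < τ) (hτ1 : τ ≤ 1) :
    1 / (τ * (2 + 3 * C)) ≤ hh C γ τ := by
  rw [hh, one_div]
  refine inv_anti₀ (kk_pos hC hτ) ?_
  have h1 : τ ^ γ ≤ 1 := Real.rpow_le_one hτ.le hτ1 hγ.le
  have h2 : 3 * C * τ ^ γ ≤ 3 * C * 1 := mul_le_mul_of_nonneg_left h1 (by positivity)
  exact mul_le_mul_of_nonneg_left (by linarith) hτ.le

lemma aa_ge {C γ τ : ℝ} (hC : 0 ≤ C) (hγ : 0 < γ) (hτ : 0 < τ) :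
    -(1 / 2) * Real.log τ ≤ aa C γ τ := by
  have := Real.rpow_nonneg hτ.le γ
  have : 0 ≤ 2 * C / γ * τ ^ γ := by positivity
  rw [aa]; linarith

lemma aa_le {C γ τ : ℝ} (hC : 0 ≤ C) (hγ : 0 < γ) (hτ : 0 < τ) (hτ1 : τ ≤ 1) :
    aa C γ τ ≤ -(1 / 2) * Real.log τ + 2 * C / γ := by
  have h1 : τ ^ γ ≤ 1 := Real.rpow_le_one hτ.le hτ1 hγ.le
  have : 2 * C / γ * τ ^ γ ≤ 2 * C / γ * 1 := mul_le_mul_of_nonneg_left h1 (by positivity)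
  rw [aa]; linarith

lemma super_in {C γ τ x A Q : ℝ} (hC : 0 ≤ C) (hγ : 0 < γ) (hγ2 : γ ≤ 1 / 2) (hτ : 0 < τ)
    (hτ1 : τ ≤ 1) (hx : 0 ≤ x) (hQ : Q ≤ 2 * x * (1 + C * τ ^ γ))
    (hA : 1 - C * (τ ^ γ + √x) ≤ A) :
    0 ≤ a1 C γ τ - x * ha C γ τ + hh C γ τ * A - hh C γ τ ^ 2 * Q := by
  have hle := hh_le (γ := γ) hC hτ
  have hpos := hh_pos (γ := γ) hC hτ
  have hp0 : 0 < τ ^ γ := Real.rpow_pos_of_pos hτ γ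
  have hpτ : τ ≤ (τ ^ γ) ^ 2 := by
    rw [← Real.rpow_natCast, ← Real.rpow_mul hτ.le]
    calc τ = τ ^ (1:ℝ) := (Real.rpow_one τ).symm
      _ ≤ τ ^ (γ * ((2:ℕ):ℝ)) :=
        Real.rpow_le_rpow_of_exponent_ge hτ hτ1 (by push_cast; linarith)
  have hge : 1 / (2 * τ) * (1 - 3 * C * τ ^ γ / 2) ≤ hh C γ τ := by
    rw [hh, ← one_div, le_div_iff₀ (kk_pos hC hτ)]
    have e : 1 / (2 * τ) * (1 - 3 * C * τ ^ γ / 2) * (τ * (2 + 3 * C * τ ^ γ)) =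
      1 - (3 * C * τ ^ γ / 2) ^ 2 := by field_simp; ring
    rw [e]
    linarith [sq_nonneg (3 * C * τ ^ γ / 2)]
  unfold ha a1
  generalize hh C γ τ = h at *
  generalize τ ^ γ = p at *
  set w := √x with hw
  have hxw : x = w ^ 2 := (Real.sq_sqrt hx).symm
  have e1 : p / τ = 2 * p * (1 / (2 * τ)) := by field_simp
  rw [e1]
  have hτi : 1 / p ≤ 2 * p * (1 / (2 * τ)) := by
    rw [← e1, div_le_div_iff₀ hp0 hτ]; linarith
  generalize 1 / (2 * τ) = j at *
  have hAM : h * w ≤ (w ^ 2 * h ^ 2 * p + 1 / p) / 2 := by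
    have e2 : (w ^ 2 * h ^ 2 * p + 1 / p) / 2 - h * w = (h * w * p - 1) ^ 2 / (2 * p) := by
      field_simp; ring
    have : 0 ≤ (h * w * p - 1) ^ 2 / (2 * p) := by positivity
    linarith
  have s1 : h * (1 - C * (p + w)) ≤ h * A := mul_le_mul_of_nonneg_left hA hpos.le
  have s2 : h ^ 2 * Q ≤ h ^ 2 * (2 * x * (1 + C * p)) :=
    mul_le_mul_of_nonneg_left hQ (by positivity)
  have s3 := mul_le_mul_of_nonneg_left hAM hC
  have s4 := mul_le_mul_of_nonneg_left hτi hC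
  have s5 : C * p * h ≤ C * p * j := mul_le_mul_of_nonneg_left hle (by positivity)
  have s6 : 0 ≤ x * (C * γ * p) * h ^ 2 := by positivity
  have s7 : 0 ≤ x * (C * p) * h ^ 2 := by positivity
  have s8 : 0 ≤ C * p * j := (mul_nonneg (by positivity) (hpos.le.trans hle))
  rw [← hxw] at s3
  linarith only [s1, s2, s3, s4, s5, s6, s7, s8, hge]

lemma super_off {C γ τ x c0 : ℝ} (hC : 0 ≤ C) (hγ : 0 < γ) (hτ : 0 < τ)
    (hτ1 : τ ≤ 1) (hc0 : 0 < c0) (hx : c0 ≤ x) (hτ2 : τ ≤ 4 * c0 / (2 + 3 * C) ^ 2) :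
    0 ≤ a1 C γ τ - x * ha C γ τ := by
  have hge := hh_ge hC hγ hτ hτ1
  have hp0 : 0 < τ ^ γ := Real.rpow_pos_of_pos hτ γ
  have h1 : (1 / (τ * (2 + 3 * C))) ^ 2 ≤ hh C γ τ ^ 2 :=
    pow_le_pow_left₀ (by positivity) hge 2
  have h2 : 1 / (2 * τ) ≤ 2 * c0 * (1 / (τ * (2 + 3 * C))) ^ 2 := by
    have e : 2 * c0 * (1 / (τ * (2 + 3 * C))) ^ 2 =
      (4 * c0 / (2 + 3 * C) ^ 2) * (1 / (2 * τ ^ 2)) := by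
      field_simp; ring
    rw [e]
    have := mul_le_mul_of_nonneg_right hτ2 (by positivity : 0 ≤ 1 / (2 * τ ^ 2))
    refine le_trans (le_of_eq ?_) this
    field_simp
  unfold ha a1
  generalize hh C γ τ = h at *
  generalize (1 / (τ * (2 + 3 * C))) = g at *
  have h3 : 2 * c0 * g ^ 2 ≤ 2 * c0 * h ^ 2 := mul_le_mul_of_nonneg_left h1 (by positivity)
  have h4 : c0 * h ^ 2 ≤ x * h ^ 2 := mul_le_mul_of_nonneg_right hx (by positivity)
  have h5 : 0 ≤ x * (3 * C * (1 + γ) * τ ^ γ) * h ^ 2 := by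
    have : 0 ≤ x := hc0.le.trans hx
    positivity
  have h6 : 0 ≤ 2 * C * (τ ^ γ / τ) := by positivity
  linarith only [h2, h3, h4, h5, h6]

lemma rpow_continuousOn' (γ : ℝ) : ContinuousOn (fun τ : ℝ => τ ^ γ) (Ioi 0) :=
  fun τ hτ => (Real.continuousAt_rpow_const τ γ (Or.inl (ne_of_gt hτ))).continuousWithinAt

lemma hh_continuousOn {C γ : ℝ} (hC : 0 ≤ C) : ContinuousOn (hh C γ) (Ioi 0) :=
  fun _ hτ => (hh_hasDerivAt hC hτ).continuousAt.continuousWithinAt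

lemma aa_continuousOn {C γ : ℝ} (hγ : 0 < γ) : ContinuousOn (aa C γ) (Ioi 0) :=
  fun _ hτ => (aa_hasDerivAt hγ hτ).continuousAt.continuousWithinAt

lemma ha_continuousOn {C γ : ℝ} (hC : 0 ≤ C) : ContinuousOn (ha C γ) (Ioi 0) := by
  unfold ha
  exact (continuousOn_const.add (continuousOn_const.mul (rpow_continuousOn' γ))).neg.mul
    ((hh_continuousOn hC).pow 2)

lemma a1_continuousOn {C γ : ℝ} : ContinuousOn (a1 C γ) (Ioi 0) := by
  unfold a1
  refine ContinuousOn.add (ContinuousOn.neg (continuousOn_const.div (by fun_prop) ?_))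
    (continuousOn_const.mul ((rpow_continuousOn' γ).div continuousOn_id ?_))
  · intro x hx; have : (0:ℝ) < x := hx; positivity
  · intro x hx; exact ne_of_gt hx

/-! ### Part 5: the Dynkin formula for functions of the truncated distance -/

lemma partition_le {f : ℝ → ℝ} {a b : ℝ} (hab : a ≤ b)
    (h : ∀ ε > 0, ∃ η > 0, ∀ x y, a ≤ x → x ≤ y → y ≤ b → y - x ≤ η → f y - f x ≤ ε * (y - x)) :
    f b ≤ f a := by
  have key : ∀ ε > 0, f b ≤ f a + ε * (b - a) := by
    intro ε hε
    obtain ⟨η, hη, H⟩ := h ε hε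
    obtain ⟨n, hn⟩ := exists_nat_gt ((b - a) / η)
    have hn0 : (0:ℝ) < n := lt_of_le_of_lt (div_nonneg (by linarith) hη.le) hn
    have hd : (b - a) / n ≤ η := by
      rw [div_lt_iff₀ hη] at hn
      rw [div_le_iff₀ hn0]; linarith
    have hd0 : 0 ≤ (b - a) / n := div_nonneg (by linarith) hn0.le
    have ind : ∀ m : ℕ, m ≤ n → f (a + m * ((b - a) / n)) ≤ f a + ε * (m * ((b - a) / n)) := by
      intro m
      induction m with
      | zero => intro _; simp
      | succ m ih =>
        intro hm
        have h1 := ih (by omega)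
        have hm' : ((m + 1 : ℕ) : ℝ) ≤ n := by exact_mod_cast hm
        have h3 : ((m + 1 : ℕ) : ℝ) * ((b - a) / n) ≤ b - a := by
          calc ((m + 1 : ℕ) : ℝ) * ((b - a) / n) ≤ n * ((b - a) / n) :=
                mul_le_mul_of_nonneg_right hm' hd0
            _ = b - a := by field_simp
        have h4 : 0 ≤ (m:ℝ) * ((b - a) / n) := by positivity
        have h2 := H (a + m * ((b - a) / n)) (a + ((m + 1 : ℕ) : ℝ) * ((b - a) / n))
          (by linarith) (by push_cast; linarith) (by linarith) (by push_cast; linarith)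
        push_cast at h2 ⊢
        linarith
    have := ind n le_rfl
    have e : (n:ℝ) * ((b - a) / n) = b - a := by field_simp
    rw [e] at this
    simpa using this
  refine le_of_forall_pos_le_add fun ε hε => ?_
  refine (key (ε / (b - a + 1)) (div_pos hε (by linarith))).trans ?_
  have : ε / (b - a + 1) * (b - a) ≤ ε := by
    rw [div_mul_eq_mul_div, div_le_iff₀ (by linarith)]
    nlinarith
  linarith

section dyn

variable {E : Set ℝ} {b σ : ℝ → ℝ → ℝ} {s z : ℝ} {μ : Kernel ℝ ℝ}

def AA (E : Set ℝ) (b σ : ℝ → ℝ → ℝ) (y R k u x : ℝ) : ℝ :=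
  tb E b u x * DD1 y R k x + tb E σ u x ^ 2 / 2 * DD2 y R k x

def QQ (E : Set ℝ) (σ : ℝ → ℝ → ℝ) (y R k u x : ℝ) : ℝ :=
  tb E σ u x ^ 2 / 2 * DD1 y R k x ^ 2

lemma integrable_comp_DD {ν : Measure ℝ} [IsProbabilityMeasure ν] {F : ℝ → ℝ} (hF : Continuous F)
    (y : ℝ) {R : ℝ} (hR : 0 < R) (k : ℝ) : Integrable (fun x => F (DD y R k x)) ν := by
  obtain ⟨M, hM⟩ := (isCompact_Icc (a := (0:ℝ)) (b := R ^ 2 / 9 / k ^ 2)).exists_bound_of_continuousOn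
    hF.continuousOn
  have hc : Continuous (DD y R k) := (DD_contDiff y hR k).continuous
  exact Integrable.of_bound (hF.comp hc).aestronglyMeasurable M
    (ae_of_all _ fun x => hM _ ⟨DD_nonneg y R k x, DD_le y R k x hR⟩)

theorem dynkin (hμ : FP E b σ s z μ) (y : ℝ) {R : ℝ} (hR : 0 < R) (k : ℝ) {F F' F'' : ℝ → ℝ}
    (h1 : ∀ x, HasDerivAt F (F' x) x) (h2 : ∀ x, HasDerivAt F' (F'' x) x) (h3 : Continuous F'')
    {c₁ c₂ : ℝ} (hs : s ≤ c₁) (hc : c₁ ≤ c₂) (hc2 : c₂ ≤ 1) :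
    ∫ x, F (DD y R k x) ∂μ c₂ - ∫ x, F (DD y R k x) ∂μ c₁ =
      ∫ u in c₁..c₂, ∫ x, (F' (DD y R k x) * AA E b σ y R k u x +
        F'' (DD y R k x) * QQ E σ y R k u x) ∂(μ u) := by
  have := hμ.prob
  set f : ℝ → ℝ := fun x => F (DD y R k x) - F (R ^ 2 / 9 / k ^ 2) with hf
  have hd1 : ∀ x, HasDerivAt f (F' (DD y R k x) * DD1 y R k x) x := fun x =>
    ((h1 _).comp x (DD_hasDerivAt y hR k x)).sub_const _
  have hd2 : ∀ x, HasDerivAt (fun x => F' (DD y R k x) * DD1 y R k x)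
      (F'' (DD y R k x) * DD1 y R k x * DD1 y R k x + F' (DD y R k x) * DD2 y R k x) x := fun x =>
    ((h2 _).comp x (DD_hasDerivAt y hR k x)).mul (DD1_hasDerivAt y hR k x)
  have e1 : deriv f = fun x => F' (DD y R k x) * DD1 y R k x := funext fun x => (hd1 x).deriv
  have e2 : deriv (deriv f) = fun x =>
      F'' (DD y R k x) * DD1 y R k x * DD1 y R k x + F' (DD y R k x) * DD2 y R k x := by
    rw [e1]; exact funext fun x => (hd2 x).deriv
  have hDc : Continuous (DD y R k) := (DD_contDiff y hR k).continuous
  have hD1c : Continuous (DD1 y R k) :=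
    continuous_iff_continuousAt.2 fun x => (DD1_hasDerivAt y hR k x).continuousAt
  have hFc : Continuous F := continuous_iff_continuousAt.2 fun x => (h1 x).continuousAt
  have hF'c : Continuous F' := continuous_iff_continuousAt.2 fun x => (h2 x).continuousAt
  have hC2 : ContDiff ℝ 2 f := by
    rw [← one_add_one_eq_two, contDiff_succ_iff_deriv]
    refine ⟨fun x => (hd1 x).differentiableAt, fun h => by simp at h, ?_⟩
    rw [contDiff_one_iff_deriv]
    refine ⟨?_, ?_⟩
    · rw [e1]; exact fun x => (hd2 x).differentiableAt
    · rw [e2]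
      exact (((h3.comp hDc).mul hD1c).mul hD1c).add ((hF'c.comp hDc).mul (DD2_continuous y R k))
  have hsupp : HasCompactSupport f := by
    refine HasCompactSupport.intro (isCompact_closedBall y R) fun x hx => ?_
    rw [Metric.mem_closedBall, Real.dist_eq, not_le] at hx
    simp only [hf]
    rw [DD_const y R k x hR hx.le, sub_self]
  have hd := hμ.dyn f hC2 hsupp c₁ c₂ hs hc hc2
  have hi : ∀ c, ∫ x, f x ∂μ c = ∫ x, F (DD y R k x) ∂μ c - F (R ^ 2 / 9 / k ^ 2) := by
    intro c
    rw [hf, integral_sub (integrable_comp_DD hFc y hR k) (integrable_const _)]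
    simp
  rw [hi, hi, e2, e1] at hd
  rw [sub_sub_sub_cancel_right] at hd
  rw [hd]
  congr 1
  ext u
  congr 1
  ext x
  simp only [AA, QQ]
  ring

end dyn

/-! ### Part 6: monotonicity in time of the integrated supersolution -/

def UU (C γ τ x : ℝ) : ℝ := Real.exp (aa C γ τ - hh C γ τ * x)
def WW (C γ τ x : ℝ) : ℝ := (a1 C γ τ - ha C γ τ * x) * UU C γ τ x
def WW1 (C γ τ x : ℝ) : ℝ :=
  (-ha C γ τ - hh C γ τ * (a1 C γ τ - ha C γ τ * x)) * UU C γ τ x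
def WW2 (C γ τ x : ℝ) : ℝ :=
  (2 * hh C γ τ * ha C γ τ + hh C γ τ ^ 2 * (a1 C γ τ - ha C γ τ * x)) * UU C γ τ x

lemma UU_pos (C γ τ x : ℝ) : 0 < UU C γ τ x := Real.exp_pos _

lemma UU_dx (C γ τ x : ℝ) : HasDerivAt (UU C γ τ) (-hh C γ τ * UU C γ τ x) x := by
  have h1 := (((hasDerivAt_id x).const_mul (hh C γ τ)).const_sub (aa C γ τ)).exp
  refine HasDerivAt.congr_deriv h1 ?_
  simp only [UU, id]
  ring

lemma UU_dt {C γ τ : ℝ} (hC : 0 ≤ C) (hγ : 0 < γ) (hτ : 0 < τ) (x : ℝ) :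
    HasDerivAt (fun τ => UU C γ τ x) (WW C γ τ x) τ := by
  have h1 := ((aa_hasDerivAt (C := C) hγ hτ).sub ((hh_hasDerivAt (γ := γ) hC hτ).mul_const x)).exp
  refine HasDerivAt.congr_deriv h1 ?_
  simp only [WW, UU, Pi.sub_apply]
  ring

lemma lin_dx (p q x : ℝ) : HasDerivAt (fun x => p - q * x) (-q) x := by
  have h1 := ((hasDerivAt_id x).const_mul q).const_sub p
  refine HasDerivAt.congr_deriv h1 ?_
  ring

lemma WW_dx (C γ τ x : ℝ) : HasDerivAt (WW C γ τ) (WW1 C γ τ x) x := by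
  have h1 := (lin_dx (a1 C γ τ) (ha C γ τ) x).mul (UU_dx C γ τ x)
  refine HasDerivAt.congr_deriv h1 ?_
  simp only [WW1]
  ring

lemma WW1_dx (C γ τ x : ℝ) : HasDerivAt (WW1 C γ τ) (WW2 C γ τ x) x := by
  have h1 := (((lin_dx (a1 C γ τ) (ha C γ τ) x).const_mul (hh C γ τ)).const_sub
    (-ha C γ τ)).mul (UU_dx C γ τ x)
  refine HasDerivAt.congr_deriv h1 ?_
  simp only [WW2]
  ring

lemma UU1_dx (C γ τ x : ℝ) : HasDerivAt (fun x => -hh C γ τ * UU C γ τ x)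
    (hh C γ τ ^ 2 * UU C γ τ x) x := by
  refine HasDerivAt.congr_deriv ((UU_dx C γ τ x).const_mul (-hh C γ τ)) ?_
  ring

lemma UU_cont2 {C γ : ℝ} (hC : 0 ≤ C) (hγ : 0 < γ) :
    ContinuousOn (fun p : ℝ × ℝ => UU C γ p.1 p.2) (Ioi 0 ×ˢ univ) := by
  unfold UU
  refine ContinuousOn.rexp (ContinuousOn.sub ?_ (ContinuousOn.mul ?_ continuousOn_snd))
  · exact (aa_continuousOn hγ).comp continuousOn_fst fun p hp => hp.1
  · exact (hh_continuousOn hC).comp continuousOn_fst fun p hp => hp.1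

lemma lin_cont2 {C γ : ℝ} (hC : 0 ≤ C) :
    ContinuousOn (fun p : ℝ × ℝ => a1 C γ p.1 - ha C γ p.1 * p.2) (Ioi 0 ×ˢ univ) := by
  refine (ContinuousOn.sub ?_ (ContinuousOn.mul ?_ continuousOn_snd))
  · exact (a1_continuousOn).comp continuousOn_fst fun p hp => hp.1
  · exact (ha_continuousOn hC).comp continuousOn_fst fun p hp => hp.1

lemma WW_cont2 {C γ : ℝ} (hC : 0 ≤ C) (hγ : 0 < γ) :
    ContinuousOn (fun p : ℝ × ℝ => WW C γ p.1 p.2) (Ioi 0 ×ˢ univ) :=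
  (lin_cont2 hC).mul (UU_cont2 hC hγ)

lemma WW1_cont2 {C γ : ℝ} (hC : 0 ≤ C) (hγ : 0 < γ) :
    ContinuousOn (fun p : ℝ × ℝ => WW1 C γ p.1 p.2) (Ioi 0 ×ˢ univ) := by
  have h1 : ContinuousOn (fun p : ℝ × ℝ => ha C γ p.1) (Ioi 0 ×ˢ univ) :=
    (ha_continuousOn hC).comp continuousOn_fst fun p hp => hp.1
  have h2 : ContinuousOn (fun p : ℝ × ℝ => hh C γ p.1) (Ioi 0 ×ˢ univ) :=
    (hh_continuousOn hC).comp continuousOn_fst fun p hp => hp.1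
  exact (h1.neg.sub (h2.mul (lin_cont2 hC))).mul (UU_cont2 hC hγ)

lemma WW2_cont2 {C γ : ℝ} (hC : 0 ≤ C) (hγ : 0 < γ) :
    ContinuousOn (fun p : ℝ × ℝ => WW2 C γ p.1 p.2) (Ioi 0 ×ˢ univ) := by
  have h1 : ContinuousOn (fun p : ℝ × ℝ => ha C γ p.1) (Ioi 0 ×ˢ univ) :=
    (ha_continuousOn hC).comp continuousOn_fst fun p hp => hp.1
  have h2 : ContinuousOn (fun p : ℝ × ℝ => hh C γ p.1) (Ioi 0 ×ˢ univ) :=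
    (hh_continuousOn hC).comp continuousOn_fst fun p hp => hp.1
  exact (((continuousOn_const.mul h2).mul h1).add ((h2.pow 2).mul (lin_cont2 hC))).mul
    (UU_cont2 hC hγ)

lemma UU_cont (C γ τ : ℝ) : Continuous (UU C γ τ) :=
  continuous_iff_continuousAt.2 fun x => (UU_dx C γ τ x).continuousAt

lemma WW_cont (C γ τ : ℝ) : Continuous (WW C γ τ) :=
  continuous_iff_continuousAt.2 fun x => (WW_dx C γ τ x).continuousAt

lemma WW1_cont (C γ τ : ℝ) : Continuous (WW1 C γ τ) :=
  continuous_iff_continuousAt.2 fun x => (WW1_dx C γ τ x).continuousAt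

lemma WW2_cont (C γ τ : ℝ) : Continuous (WW2 C γ τ) := by
  unfold WW2
  have := UU_cont C γ τ
  fun_prop

/-- first-order expansion in time, uniformly in space -/
lemma UU_expand {C γ τ0 τ1 D : ℝ} (hC : 0 ≤ C) (hγ : 0 < γ) (hτ0 : 0 < τ0) {ε : ℝ} (hε : 0 < ε) :
    ∃ η > 0, ∀ p q, τ0 ≤ q → q ≤ p → p ≤ τ1 → p - q ≤ η → ∀ x ∈ Icc 0 D,
      UU C γ q x - UU C γ p x ≤ -(p - q) * WW C γ p x + ε * (p - q) := by
  have hK : IsCompact (Icc τ0 τ1 ×ˢ Icc 0 D) := isCompact_Icc.prod isCompact_Icc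
  have hsub : Icc τ0 τ1 ×ˢ Icc 0 D ⊆ Ioi 0 ×ˢ (univ : Set ℝ) := fun p hp =>
    ⟨hτ0.trans_le hp.1.1, mem_univ _⟩
  have huc := hK.uniformContinuousOn_of_continuous ((WW_cont2 hC hγ).mono hsub)
  obtain ⟨η, hη, H⟩ := Metric.uniformContinuousOn_iff.1 huc ε hε
  refine ⟨η / 2, by positivity, fun p q hq hqp hp hpq x hx => ?_⟩
  rcases hqp.eq_or_lt with h | h
  · subst h; simp
  obtain ⟨ξ, hξ, e⟩ := exists_hasDerivAt_eq_slope (fun τ => UU C γ τ x) (fun τ => WW C γ τ x) h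
    (fun τ hτ => (UU_dt hC hγ (hτ0.trans_le (hq.trans hτ.1)) x).continuousAt.continuousWithinAt)
    (fun τ hτ => UU_dt hC hγ (hτ0.trans_le (hq.trans hτ.1.le)) x)
  have hpq0 : 0 < p - q := by linarith
  rw [eq_div_iff hpq0.ne'] at e
  have hd := H (ξ, x) ⟨⟨hq.trans hξ.1.le, hξ.2.le.trans hp⟩, hx⟩ (p, x) ⟨⟨hq.trans hqp, hp⟩, hx⟩ (by
    rw [Prod.dist_eq, dist_self, Real.dist_eq, abs_of_neg (by linarith [hξ.2])]
    refine max_lt ?_ hη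
    linarith [hξ.1])
  rw [Real.dist_eq] at hd
  have h3 := (abs_lt.1 hd).1
  have h4 := mul_le_mul_of_nonneg_right h3.le hpq0.le
  linarith

section mono

variable {E : Set ℝ} {b σ : ℝ → ℝ → ℝ} {s z : ℝ} {μ : Kernel ℝ ℝ}

lemma inner_integrable {y R k C c₁ c₂ : ℝ} (hμ : FP E b σ s z μ) (hR : 0 < R)
    (hbm : Measurable (Function.uncurry (tb E b))) (hσm : Measurable (Function.uncurry (tb E σ)))
    (hA : ∀ u ∈ Icc c₁ c₂, ∀ x, |AA E b σ y R k u x| ≤ C ∧ |QQ E σ y R k u x| ≤ C)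
    {F' F'' : ℝ → ℝ} (h1 : Continuous F') (h2 : Continuous F'') (hc : c₁ ≤ c₂) {M : ℝ}
    (hM : ∀ x ∈ Icc 0 (R ^ 2 / 9 / k ^ 2), |F' x| ≤ M ∧ |F'' x| ≤ M) :
    IntervalIntegrable (fun u => ∫ x, (F' (DD y R k x) * AA E b σ y R k u x +
        F'' (DD y R k x) * QQ E σ y R k u x) ∂(μ u)) volume c₁ c₂ ∧
    (∀ u ∈ Icc c₁ c₂, Integrable (fun x => F' (DD y R k x) * AA E b σ y R k u x +
        F'' (DD y R k x) * QQ E σ y R k u x) (μ u)) ∧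
    ∀ u ∈ Icc c₁ c₂, |∫ x, (F' (DD y R k x) * AA E b σ y R k u x +
        F'' (DD y R k x) * QQ E σ y R k u x) ∂(μ u)| ≤ 2 * M * C := by
  have := hμ.prob
  have hDc : Measurable (DD y R k) := (DD_contDiff y hR k).continuous.measurable
  have hD1c : Measurable (DD1 y R k) :=
    (continuous_iff_continuousAt.2 fun x => (DD1_hasDerivAt y hR k x).continuousAt).measurable
  have hD2c : Measurable (DD2 y R k) := (DD2_continuous y R k).measurable
  have hbm' : Measurable (fun p : ℝ × ℝ => tb E b p.1 p.2) := hbm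
  have hσm' : Measurable (fun p : ℝ × ℝ => tb E σ p.1 p.2) := hσm
  have h1m := h1.measurable
  have h2m := h2.measurable
  have hm : Measurable (fun p : ℝ × ℝ => F' (DD y R k p.2) * AA E b σ y R k p.1 p.2 +
        F'' (DD y R k p.2) * QQ E σ y R k p.1 p.2) := by
    unfold AA QQ
    fun_prop
  have hbd : ∀ u ∈ Icc c₁ c₂, ∀ x, ‖F' (DD y R k x) * AA E b σ y R k u x +
        F'' (DD y R k x) * QQ E σ y R k u x‖ ≤ 2 * M * C := by
    intro u hu x
    have hx := hM (DD y R k x) ⟨DD_nonneg y R k x, DD_le y R k x hR⟩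
    have hu' := hA u hu x
    have hM0 : 0 ≤ M := (abs_nonneg _).trans hx.1
    have s1 := mul_le_mul hx.1 hu'.1 (abs_nonneg _) hM0
    have s2 := mul_le_mul hx.2 hu'.2 (abs_nonneg _) hM0
    rw [← abs_mul] at s1 s2
    rw [Real.norm_eq_abs]
    refine (abs_add_le _ _).trans ?_
    linarith
  have hint : ∀ u ∈ Icc c₁ c₂, |∫ x, (F' (DD y R k x) * AA E b σ y R k u x +
        F'' (DD y R k x) * QQ E σ y R k u x) ∂(μ u)| ≤ 2 * M * C := by
    intro u hu
    have := norm_integral_le_of_norm_le_const (μ := μ u) (ae_of_all _ (hbd u hu))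
    simpa using this
  refine ⟨?_, fun u hu => ?_, hint⟩
  · rw [intervalIntegrable_iff_integrableOn_Icc_of_le hc]
    have hsm : StronglyMeasurable (fun u => ∫ x, (F' (DD y R k x) * AA E b σ y R k u x +
        F'' (DD y R k x) * QQ E σ y R k u x) ∂(μ u)) :=
      MeasureTheory.StronglyMeasurable.integral_kernel_prod_right' (κ := μ) hm.stronglyMeasurable
    refine Measure.integrableOn_of_bounded (M := 2 * M * C) (by simp)
      hsm.aestronglyMeasurable ?_
    exact (ae_restrict_iff' measurableSet_Icc).2 (ae_of_all _ fun u hu => hint u hu)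
  · exact Integrable.of_bound (hm.comp measurable_prodMk_left).aestronglyMeasurable (2 * M * C)
      (ae_of_all _ (hbd u hu))

theorem phi_mono {y R k C γ t c0 : ℝ} (hμ : FP E b σ s z μ) (hR : 0 < R)
    (hbm : Measurable (Function.uncurry (tb E b))) (hσm : Measurable (Function.uncurry (tb E σ)))
    (hC : 0 ≤ C) (hγ : 0 < γ) (hγ2 : γ ≤ 1 / 2) (ht : t ≤ 1) (hs : 0 ≤ s)
    (hcoef : ∀ c, 0 ≤ c → c ≤ t → ∀ x ∈ E,
        σ c x ^ 2 / 2 * DD1 y R k x ^ 2 ≤ 2 * DD y R k x * (1 + C * (t - c) ^ γ) ∧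
        1 - C * ((t - c) ^ γ + √(DD y R k x)) ≤
          b c x * DD1 y R k x + σ c x ^ 2 / 2 * DD2 y R k x ∧
        |b c x * DD1 y R k x + σ c x ^ 2 / 2 * DD2 y R k x| ≤ C ∧
        |σ c x ^ 2 / 2 * DD1 y R k x ^ 2| ≤ C)
    (hc0 : 0 < c0) (hoff : ∀ x, x ∉ E → c0 ≤ DD y R k x) {c₁ δ : ℝ} (hδ : 0 < δ)
    (hc1s : s ≤ c₁) (hc1t : c₁ ≤ t) (hτ1 : t + δ - c₁ ≤ 1)
    (hτ2 : t + δ - c₁ ≤ 4 * c0 / (2 + 3 * C) ^ 2) :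
    ∫ x, UU C γ δ (DD y R k x) ∂μ t ≤ ∫ x, UU C γ (t + δ - c₁) (DD y R k x) ∂μ c₁ := by
  have hprob := hμ.prob
  have hAQ : ∀ u ∈ Icc c₁ t, ∀ x, |AA E b σ y R k u x| ≤ C ∧ |QQ E σ y R k u x| ≤ C := by
    intro u hu x
    unfold AA QQ
    by_cases hx : x ∈ E
    · have hu01 : u ∈ Icc (0:ℝ) 1 := ⟨hs.trans (hc1s.trans hu.1), hu.2.trans ht⟩
      rw [tb_of_mem hu01 hx, tb_of_mem hu01 hx]
      exact (hcoef u hu01.1 hu.2 x hx).2.2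
    · rw [tb_of_notMem hx, tb_of_notMem hx]
      simpa using hC
  set D := R ^ 2 / 9 / k ^ 2 with hD
  set τm := t + δ - c₁ with hτm
  have hKc : IsCompact (Icc δ τm ×ˢ Icc 0 D) := isCompact_Icc.prod isCompact_Icc
  have hsub : Icc δ τm ×ˢ Icc 0 D ⊆ Ioi 0 ×ˢ (univ : Set ℝ) := fun p hp =>
    ⟨hδ.trans_le hp.1.1, mem_univ _⟩
  obtain ⟨M1, hM1⟩ := hKc.exists_bound_of_continuousOn ((WW1_cont2 hC hγ).mono hsub)
  obtain ⟨M2, hM2⟩ := hKc.exists_bound_of_continuousOn ((WW2_cont2 hC hγ).mono hsub)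
  set M := max (max M1 M2) 0 with hM
  have hM0 : 0 ≤ M := le_max_right _ _
  have hMM : ∀ τ ∈ Icc δ τm, ∀ x ∈ Icc 0 D, |WW1 C γ τ x| ≤ M ∧ |WW2 C γ τ x| ≤ M := by
    intro τ hτ x hx
    exact ⟨(hM1 (τ, x) ⟨hτ, hx⟩).trans ((le_max_left _ _).trans (le_max_left _ _)),
      (hM2 (τ, x) ⟨hτ, hx⟩).trans ((le_max_right _ _).trans (le_max_left _ _))⟩
  set φ : ℝ → ℝ := fun c => ∫ x, UU C γ (t + δ - c) (DD y R k x) ∂μ c with hφ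
  have goal : φ t ≤ φ c₁ := by
    refine partition_le hc1t fun ε hε => ?_
    obtain ⟨η, hη, hexp⟩ := UU_expand (τ1 := τm) (D := D) hC hγ hδ (half_pos hε)
    set K := 2 * M * C with hK
    have hK0 : 0 ≤ K := by positivity
    refine ⟨min η (ε / 2 / (K + 1)), by positivity, fun p q hp hpq hq hle => ?_⟩
    set τ := t + δ - p with hτ
    have hτI : τ ∈ Icc δ τm := ⟨by rw [hτ]; linarith, by rw [hτ, hτm]; linarith⟩
    have hτ0 : 0 < τ := hδ.trans_le hτI.1
    have hτ1' : τ ≤ 1 := hτI.2.trans hτ1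
    -- the time part
    have hU : ∀ c τ, Integrable (fun x => UU C γ τ (DD y R k x)) (μ c) := fun c τ =>
      integrable_comp_DD (UU_cont C γ τ) y hR k
    have hW : ∀ c τ, Integrable (fun x => WW C γ τ (DD y R k x)) (μ c) := fun c τ =>
      integrable_comp_DD (WW_cont C γ τ) y hR k
    have part1 : φ q - ∫ x, UU C γ τ (DD y R k x) ∂μ q ≤
        -(q - p) * ∫ x, WW C γ τ (DD y R k x) ∂μ q + ε / 2 * (q - p) := by
      have e1 : -(q - p) * ∫ x, WW C γ τ (DD y R k x) ∂μ q + ε / 2 * (q - p) =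
          ∫ x, (-(q - p) * WW C γ τ (DD y R k x) + ε / 2 * (q - p)) ∂μ q := by
        rw [integral_add ((hW q τ).const_mul _) (integrable_const _), integral_const_mul]
        simp
      rw [e1]
      simp only [hφ]
      rw [← integral_sub (hU _ _) (hU _ _)]
      refine integral_mono ((hU _ _).sub (hU _ _))
        (((hW q τ).const_mul _).add (integrable_const _)) fun x => ?_
      have e2 : τ - (t + δ - q) = q - p := by rw [hτ]; ring
      have := hexp τ (t + δ - q) (by linarith) (by linarith) hτI.2
        (by rw [e2]; exact hle.trans (min_le_left _ _)) (DD y R k x)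
        ⟨DD_nonneg y R k x, DD_le y R k x hR⟩
      rw [e2] at this
      exact this
    -- the space part
    have hAQ' : ∀ u ∈ Icc p q, ∀ x, |AA E b σ y R k u x| ≤ C ∧ |QQ E σ y R k u x| ≤ C :=
      fun u hu x => hAQ u ⟨hp.trans hu.1, hu.2.trans hq⟩ x
    have dynU := dynkin hμ y hR k (UU_dx C γ τ) (UU1_dx C γ τ)
      (continuous_const.mul (UU_cont C γ τ)) (hc1s.trans hp) hpq (hq.trans ht)
    obtain ⟨MU, hMU⟩ := (isCompact_Icc (a := 0) (b := D)).exists_bound_of_continuousOn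
      (continuous_const.mul (UU_cont C γ τ) : Continuous fun x => -hh C γ τ * UU C γ τ x).continuousOn
    obtain ⟨MU', hMU'⟩ := (isCompact_Icc (a := 0) (b := D)).exists_bound_of_continuousOn
      (continuous_const.mul (UU_cont C γ τ) : Continuous fun x => hh C γ τ ^ 2 * UU C γ τ x).continuousOn
    have intU := inner_integrable (y := y) (R := R) (k := k) (C := C) hμ hR hbm hσm hAQ'
      (continuous_const.mul (UU_cont C γ τ) : Continuous fun x => -hh C γ τ * UU C γ τ x)
      (continuous_const.mul (UU_cont C γ τ) : Continuous fun x => hh C γ τ ^ 2 * UU C γ τ x) hpq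
      (M := max MU MU') (fun x hx => ⟨(hMU x hx).trans (le_max_left _ _),
        (hMU' x hx).trans (le_max_right _ _)⟩)
    have intW : ∀ u ∈ Icc p q, |∫ x, WW C γ τ (DD y R k x) ∂μ q - ∫ x, WW C γ τ (DD y R k x) ∂μ u|
        ≤ K * (q - p) := by
      intro u hu
      rw [dynkin hμ y hR k (WW_dx C γ τ) (WW1_dx C γ τ) (WW2_cont C γ τ)
        (hc1s.trans (hp.trans hu.1)) hu.2 (hq.trans ht)]
      have h1 := (inner_integrable (y := y) (R := R) (k := k) (C := C) hμ hR hbm hσm hAQ'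
        (WW1_cont C γ τ) (WW2_cont C γ τ) hpq (hMM τ hτI)).2.2
      have h2 := intervalIntegral.norm_integral_le_of_norm_le_const (a := u) (b := q) (C := K)
        (f := fun u => ∫ x, (WW1 C γ τ (DD y R k x) * AA E b σ y R k u x +
          WW2 C γ τ (DD y R k x) * QQ E σ y R k u x) ∂(μ u)) (fun v hv => by
          rw [uIoc_of_le hu.2] at hv
          exact h1 v ⟨hu.1.trans hv.1.le, hv.2⟩)
      rw [Real.norm_eq_abs] at h2
      refine h2.trans (mul_le_mul_of_nonneg_left ?_ hK0)
      rw [abs_of_nonneg (by linarith [hu.2])]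
      linarith [hu.1]
    have point : ∀ u ∈ Icc p q, ∫ x, (-hh C γ τ * UU C γ τ (DD y R k x) * AA E b σ y R k u x +
        hh C γ τ ^ 2 * UU C γ τ (DD y R k x) * QQ E σ y R k u x) ∂(μ u) ≤
        ∫ x, WW C γ τ (DD y R k x) ∂μ q + K * (q - p) := by
      intro u hu
      have h1 : ∫ x, (-hh C γ τ * UU C γ τ (DD y R k x) * AA E b σ y R k u x +
        hh C γ τ ^ 2 * UU C γ τ (DD y R k x) * QQ E σ y R k u x) ∂(μ u) ≤
          ∫ x, WW C γ τ (DD y R k x) ∂μ u := by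
        refine integral_mono (intU.2.1 u hu) (hW u τ) fun x => ?_
        have hut : u ≤ t := hu.2.trans hq
        have hu0 : 0 ≤ u := hs.trans (hc1s.trans (hp.trans hu.1))
        have hu01 : u ∈ Icc (0:ℝ) 1 := ⟨hu0, hut.trans ht⟩
        have key : 0 ≤ a1 C γ τ - DD y R k x * ha C γ τ + hh C γ τ * AA E b σ y R k u x -
            hh C γ τ ^ 2 * QQ E σ y R k u x := by
          by_cases hx : x ∈ E
          · obtain ⟨g1, g2, -, -⟩ := hcoef u hu0 hut x hx
            have hpw : (t - u) ^ γ ≤ τ ^ γ :=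
              Real.rpow_le_rpow (by linarith) (by rw [hτ]; linarith [hu.1]) hγ.le
            have hCp := mul_le_mul_of_nonneg_left hpw hC
            have hx0 := DD_nonneg y R k x
            refine super_in hC hγ hγ2 hτ0 hτ1' hx0 ?_ ?_
            · unfold QQ
              rw [tb_of_mem hu01 hx]
              refine g1.trans (mul_le_mul_of_nonneg_left ?_ (by positivity))
              linarith
            · unfold AA
              rw [tb_of_mem hu01 hx, tb_of_mem hu01 hx]
              refine le_trans ?_ g2
              linarith
          · have h0 := super_off hC hγ hτ0 hτ1' hc0 (hoff x hx) (hτI.2.trans hτ2)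
            unfold AA QQ
            rw [tb_of_notMem hx, tb_of_notMem hx]
            simpa using h0
        have := mul_nonneg key (UU_pos C γ τ (DD y R k x)).le
        simp only [WW]
        linarith
      have h2 := (abs_le.1 (intW u hu)).1
      linarith
    have part2 : ∫ x, UU C γ τ (DD y R k x) ∂μ q - φ p ≤
        (q - p) * (∫ x, WW C γ τ (DD y R k x) ∂μ q + K * (q - p)) := by
      simp only [hφ]
      rw [dynU]
      refine (intervalIntegral.integral_mono_on hpq intU.1
        (intervalIntegrable_const (c := ∫ x, WW C γ τ (DD y R k x) ∂μ q + K * (q - p)))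
        point).trans (le_of_eq ?_)
      rw [intervalIntegral.integral_const, smul_eq_mul]
    have h5 : K * (q - p) ≤ ε / 2 := by
      have h6 : q - p ≤ ε / 2 / (K + 1) := hle.trans (min_le_right _ _)
      rw [le_div_iff₀ (by linarith)] at h6
      linarith
    have h7 := mul_le_mul_of_nonneg_right h5 (sub_nonneg.2 hpq)
    linarith
  have e : t + δ - t = δ := by ring
  simp only [hφ, e] at goal
  exact goal

end mono

/-! ### Part 7: mass of small balls and off-diagonal density bounds -/

lemma exp_half_log {τ : ℝ} (hτ : 0 < τ) : Real.exp (-(1 / 2) * Real.log τ) = (√τ)⁻¹ := by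
  rw [show -(1 / 2) * Real.log τ = -(1 / 2 * Real.log τ) by ring, Real.exp_neg]
  rw [Real.sqrt_eq_rpow, Real.rpow_def_of_pos hτ]
  ring_nf

lemma UU_upper1 {C γ τ x c : ℝ} (hC : 0 ≤ C) (hγ : 0 < γ) (hτ : 0 < τ) (hτ1 : τ ≤ 1)
    (hc : 0 < c) (hx : c ≤ x) :
    UU C γ τ x ≤ Real.exp (2 * C / γ) * ((2 + 3 * C) / c) * √τ := by
  have h1 := aa_le hC hγ hτ hτ1
  have h2 := hh_ge hC hγ hτ hτ1
  have h3 : c / (2 + 3 * C) / τ ≤ hh C γ τ * x := by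
    calc c / (2 + 3 * C) / τ = 1 / (τ * (2 + 3 * C)) * c := by field_simp
      _ ≤ hh C γ τ * x := mul_le_mul h2 hx hc.le (hh_pos hC hτ).le
  set w := c / (2 + 3 * C) / τ with hw
  have hw0 : 0 < w := by positivity
  have h4 : Real.exp (-w) ≤ w⁻¹ := by
    rw [Real.exp_neg]
    exact inv_anti₀ hw0 (by linarith [Real.add_one_le_exp w])
  calc UU C γ τ x ≤ Real.exp (2 * C / γ + -(1 / 2) * Real.log τ + -w) := by
        unfold UU
        exact Real.exp_le_exp.2 (by linarith)
    _ = Real.exp (2 * C / γ) * (√τ)⁻¹ * Real.exp (-w) := by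
        rw [Real.exp_add, Real.exp_add, exp_half_log hτ]
    _ ≤ Real.exp (2 * C / γ) * (√τ)⁻¹ * w⁻¹ := by gcongr
    _ = Real.exp (2 * C / γ) * ((2 + 3 * C) / c) * √τ := by
        have hs : 0 < √τ := Real.sqrt_pos.2 hτ
        have e : τ = √τ * √τ := (Real.mul_self_sqrt hτ.le).symm
        have e2 : w⁻¹ = (2 + 3 * C) / c * (√τ * √τ) := by
          rw [← e, hw]; field_simp
        rw [e2]
        field_simp

lemma UU_upper2 {C γ τ τ1 x : ℝ} (hC : 0 ≤ C) (hγ : 0 < γ) (hτ : 0 < τ1) (hττ : τ1 ≤ τ)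
    (hτ1 : τ ≤ 1) (hx : 0 ≤ x) :
    UU C γ τ x ≤ Real.exp (2 * C / γ) * (√τ1)⁻¹ := by
  have hτ0 : 0 < τ := hτ.trans_le hττ
  have h1 := aa_le hC hγ hτ0 hτ1
  have h2 : 0 ≤ hh C γ τ * x := mul_nonneg (hh_pos hC hτ0).le hx
  have h3 := Real.log_le_log hτ hττ
  rw [← exp_half_log hτ, ← Real.exp_add]
  exact Real.exp_le_exp.2 (by linarith)

lemma UU_lower {C γ δ x k : ℝ} (hC : 0 ≤ C) (hγ : 0 < γ) (hδ : 0 < δ)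
    (hx : x ≤ δ / k ^ 2) : Real.exp (-(1 / (2 * k ^ 2))) * (√δ)⁻¹ ≤ UU C γ δ x := by
  have h1 := aa_ge hC hγ hδ
  have h2 : hh C γ δ * x ≤ 1 / (2 * k ^ 2) := by
    calc hh C γ δ * x ≤ hh C γ δ * (δ / k ^ 2) :=
          mul_le_mul_of_nonneg_left hx (hh_pos hC hδ).le
      _ ≤ 1 / (2 * δ) * (δ / k ^ 2) :=
          mul_le_mul_of_nonneg_right (hh_le hC hδ) (by positivity)
      _ = 1 / (2 * k ^ 2) := by field_simp
  rw [← exp_half_log hδ, ← Real.exp_add]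
  exact Real.exp_le_exp.2 (by linarith)

theorem mass_bound {E : Set ℝ} (hEo : IsOpen E) {b σ : ℝ → ℝ → ℝ} (hA1 : A1 E b σ) {t y r : ℝ}
    (ht : t ∈ Ioc (0:ℝ) 1) (hy : y ∈ E) (hr : 0 < r) :
    ∃ C τ1 : ℝ, 0 < τ1 ∧ 0 ≤ C ∧ ∀ s ∈ Ico (0:ℝ) t, ∀ z, r ≤ |y - z| → ∀ μ : Kernel ℝ ℝ,
      FP E b σ s z μ → ∀ ρ, 0 < ρ → ρ ^ 2 ≤ τ1 →
        (t - s ≤ τ1 → (μ t).real (Metric.closedBall y ρ) ≤ C * √(t - s + ρ ^ 2) * ρ) ∧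
        (μ t).real (Metric.closedBall y ρ) ≤ C * ρ := by
  obtain ⟨R, k, C, γ, hR, hk, hC, hγ, hγ2, hcoef⟩ := coef_bounds hA1 ht hy
  obtain ⟨cr, hcr, hcr'⟩ := DD_lower y R k hR hk hr
  obtain ⟨ρ0, hρ0, hball⟩ := Metric.isOpen_iff.1 hEo y hy
  obtain ⟨c0, hc0, hc0'⟩ := DD_lower y R k hR hk hρ0
  have hoff : ∀ x, x ∉ E → c0 ≤ DD y R k x := by
    intro x hx
    refine hc0' x ?_
    by_contra h
    exact hx (hball (by rw [Metric.mem_ball, Real.dist_eq]; linarith))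
  obtain ⟨K, hK⟩ := hA1.lipschitz
  obtain ⟨K', γ', hγ', hK'⟩ := hA1.holder
  have hbm : Measurable (Function.uncurry (tb E b)) := tb_measurable hEo hγ'
    (fun t ht z hz z' hz' => (hK t ht z hz z' hz').1)
    (fun z hz t ht t' ht' => (hK' z hz t ht t' ht').1)
  have hσm : Measurable (Function.uncurry (tb E σ)) := tb_measurable hEo hγ'
    (fun t ht z hz z' hz' => (hK t ht z hz z' hz').2)
    (fun z hz t ht t' ht' => (hK' z hz t ht t' ht').2)
  set τs := min 1 (4 * c0 / (2 + 3 * C) ^ 2) with hτs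
  have hτs0 : 0 < τs := by positivity
  set C3 := Real.exp (2 * C / γ) * ((2 + 3 * C) / cr) + Real.exp (2 * C / γ) * (√(τs / 2))⁻¹ with hC3
  have hC30 : 0 ≤ C3 := by positivity
  have hx1 : 0 ≤ Real.exp (2 * C / γ) * ((2 + 3 * C) / cr) := by positivity
  have hx2 : 0 ≤ Real.exp (2 * C / γ) * (√(τs / 2))⁻¹ := by positivity
  refine ⟨Real.exp (1 / (2 * k ^ 2)) * C3, τs / 2, by positivity, by positivity,
    fun s hs z hz μ hμ ρ hρ hρ2 => ?_⟩
  have hprob := hμ.prob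
  have hδ : 0 < ρ ^ 2 := by positivity
  -- lower bound for the integral
  have low : ∀ M : ℝ, ∫ x, UU C γ (ρ ^ 2) (DD y R k x) ∂μ t ≤ M →
      (μ t).real (Metric.closedBall y ρ) ≤ Real.exp (1 / (2 * k ^ 2)) * M * ρ := by
    intro M hM
    have hint : Integrable (fun x => UU C γ (ρ ^ 2) (DD y R k x)) (μ t) :=
      integrable_comp_DD (UU_cont C γ _) y hR k
    have h1 := mul_meas_ge_le_integral_of_nonneg
      (ae_of_all (μ t) fun x => (UU_pos C γ (ρ ^ 2) (DD y R k x)).le) hint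
      (Real.exp (-(1 / (2 * k ^ 2))) * (√(ρ ^ 2))⁻¹)
    have h2 : (μ t).real (Metric.closedBall y ρ) ≤ (μ t).real
        {x | Real.exp (-(1 / (2 * k ^ 2))) * (√(ρ ^ 2))⁻¹ ≤ UU C γ (ρ ^ 2) (DD y R k x)} := by
      refine measureReal_mono fun x hx => ?_
      rw [Metric.mem_closedBall, Real.dist_eq] at hx
      refine UU_lower hC hγ hδ ((DD_le_sq y R k x hR).trans ?_)
      refine div_le_div_of_nonneg_right ?_ (by positivity)
      rw [← sq_abs (x - y)]
      exact pow_le_pow_left₀ (abs_nonneg _) hx 2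
    rw [Real.sqrt_sq hρ.le] at h1 h2
    have h3 := (mul_le_mul_of_nonneg_left h2
      (by positivity : 0 ≤ Real.exp (-(1 / (2 * k ^ 2))) * ρ⁻¹)).trans (h1.trans hM)
    rw [Real.exp_neg] at h3
    have h4 := mul_le_mul_of_nonneg_left h3
      (by positivity : 0 ≤ Real.exp (1 / (2 * k ^ 2)) * ρ)
    have e : Real.exp (1 / (2 * k ^ 2)) * ρ * ((Real.exp (1 / (2 * k ^ 2)))⁻¹ * ρ⁻¹ *
        (μ t).real (Metric.closedBall y ρ)) = (μ t).real (Metric.closedBall y ρ) := by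
      have := (Real.exp_pos (1 / (2 * k ^ 2))).ne'
      field_simp
    rw [e] at h4
    linarith
  have near : t - s ≤ τs / 2 →
      ∫ x, UU C γ (ρ ^ 2) (DD y R k x) ∂μ t ≤ C3 * √(t - s + ρ ^ 2) ∧ t - s + ρ ^ 2 ≤ 1 := by
    intro hts
    have hm := phi_mono hμ hR hbm hσm hC hγ hγ2 ht.2 hs.1 hcoef hc0 hoff hδ le_rfl hs.2.le
      (by linarith [min_le_left 1 (4 * c0 / (2 + 3 * C) ^ 2)])
      (by linarith [min_le_right 1 (4 * c0 / (2 + 3 * C) ^ 2)])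
    rw [hμ.init, integral_dirac] at hm
    have hτ1 : t + ρ ^ 2 - s ≤ 1 := by linarith [min_le_left 1 (4 * c0 / (2 + 3 * C) ^ 2)]
    have h1 := UU_upper1 hC hγ (by linarith [hs.2] : 0 < t + ρ ^ 2 - s) hτ1 hcr
      (hcr' z (by rw [abs_sub_comm]; exact hz))
    have e : t + ρ ^ 2 - s = t - s + ρ ^ 2 := by ring
    rw [e] at hm h1 hτ1
    refine ⟨hm.trans (h1.trans ?_), hτ1⟩
    refine mul_le_mul_of_nonneg_right ?_ (Real.sqrt_nonneg _)
    linarith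
  have far : ∫ x, UU C γ (ρ ^ 2) (DD y R k x) ∂μ t ≤ C3 := by
    rcases le_total (t - s) (τs / 2) with h | h
    · obtain ⟨h1, h2⟩ := near h
      refine h1.trans ?_
      have : √(t - s + ρ ^ 2) ≤ 1 := Real.sqrt_le_one.2 h2
      calc C3 * √(t - s + ρ ^ 2) ≤ C3 * 1 := mul_le_mul_of_nonneg_left this hC30
        _ = C3 := mul_one _
    · have hm := phi_mono hμ hR hbm hσm hC hγ hγ2 ht.2 hs.1 hcoef hc0 hoff hδ
        (c₁ := t - τs / 2) (by linarith) (by linarith)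
        (by linarith [min_le_left 1 (4 * c0 / (2 + 3 * C) ^ 2)])
        (by linarith [min_le_right 1 (4 * c0 / (2 + 3 * C) ^ 2)])
      refine hm.trans ?_
      have e : t + ρ ^ 2 - (t - τs / 2) = τs / 2 + ρ ^ 2 := by ring
      rw [e]
      have h1 : ∫ x, UU C γ (τs / 2 + ρ ^ 2) (DD y R k x) ∂μ (t - τs / 2) ≤
          ∫ _, Real.exp (2 * C / γ) * (√(τs / 2))⁻¹ ∂μ (t - τs / 2) := by
        refine integral_mono (integrable_comp_DD (UU_cont C γ _) y hR k) (integrable_const _)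
          fun x => ?_
        exact UU_upper2 hC hγ (by positivity) (by linarith)
          (by linarith [min_le_left 1 (4 * c0 / (2 + 3 * C) ^ 2)]) (DD_nonneg y R k x)
      refine h1.trans ?_
      simp only [integral_const, probReal_univ, smul_eq_mul, one_mul]
      linarith
  refine ⟨fun hts => ?_, low _ far⟩
  have := low _ (near hts).1
  linarith

lemma density_le {E : Set ℝ} (hEo : IsOpen E) {f : ℝ → ℝ} (hf : ContinuousOn f E)
    {ν : Measure ℝ} [IsProbabilityMeasure ν]
    (hν : ∀ A : Set ℝ, MeasurableSet A → A ⊆ E → ν A = ENNReal.ofReal (∫ y in A, f y))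
    {y : ℝ} (hy : y ∈ E) {H : ℝ → ℝ} {L : ℝ} (hL : 0 ≤ L) (hH : Tendsto H (𝓝[>] 0) (𝓝 L))
    (hb : ∀ᶠ ρ in 𝓝[>] (0:ℝ), ν.real (Metric.closedBall y ρ) ≤ H ρ * ρ) : f y ≤ L := by
  by_contra hlt
  push Not at hlt
  set L' := (f y + L) / 2 with hL'
  have h1 : L < L' := by rw [hL']; linarith
  have h2 : L' < f y := by rw [hL']; linarith
  have hev : ∀ᶠ x in 𝓝 y, L' < f x ∧ x ∈ E :=
    ((hf.continuousAt (hEo.mem_nhds hy)).eventually (lt_mem_nhds h2)).and (hEo.mem_nhds hy)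
  obtain ⟨ε, hε, hball⟩ := Metric.eventually_nhds_iff.1 hev
  have hε' : ∀ᶠ ρ in 𝓝[>] (0:ℝ), ρ < ε := eventually_nhdsWithin_of_eventually_nhds (gt_mem_nhds hε)
  have hH' : ∀ᶠ ρ in 𝓝[>] (0:ℝ), H ρ < 2 * L' := hH.eventually (gt_mem_nhds (by linarith))
  obtain ⟨ρ, h3, h4, h5, h6⟩ :=
    (hb.and (hε'.and (hH'.and self_mem_nhdsWithin))).exists
  have hρ : 0 < ρ := h6
  have hsub : ∀ x ∈ Metric.closedBall y ρ, L' < f x ∧ x ∈ E := fun x hx =>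
    hball (lt_of_le_of_lt hx h4)
  have hcont : ContinuousOn f (Metric.closedBall y ρ) := hf.mono fun x hx => (hsub x hx).2
  have hint : IntegrableOn f (Metric.closedBall y ρ) :=
    hcont.integrableOn_compact (isCompact_closedBall y ρ)
  have h7 : L' * (2 * ρ) ≤ ∫ x in Metric.closedBall y ρ, f x := by
    have := setIntegral_ge_of_const_le_real (μ := volume) measurableSet_closedBall
      (isCompact_closedBall y ρ).measure_lt_top.ne
      (fun x hx => (hsub x hx).1.le) hint
    simpa [Measure.real, Real.volume_closedBall, hρ.le] using this
  have h8 : (ν.real (Metric.closedBall y ρ)) = ∫ x in Metric.closedBall y ρ, f x := by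
    rw [Measure.real, hν _ measurableSet_closedBall (fun x hx => (hsub x hx).2),
      ENNReal.toReal_ofReal]
    exact le_trans (by have : 0 ≤ L' := by linarith
                       positivity) h7
  rw [h8] at h3
  have h9 := h7.trans h3
  have : H ρ * ρ < 2 * L' * ρ := mul_lt_mul_of_pos_right h5 hρ
  linarith

/-! ### Part 8: the killed diffusion survives with positive probability; sign of the density -/

def FB (ε x : ℝ) : ℝ := max 0 (ε - x) ^ 4
def FB1 (ε x : ℝ) : ℝ := -4 * max 0 (ε - x) ^ 3
def FB2 (ε x : ℝ) : ℝ := 12 * max 0 (ε - x) ^ 2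

lemma FB_dx (ε x : ℝ) : HasDerivAt (FB ε) (FB1 ε x) x := by
  have h := (hasDerivAt_maxpow 2 (ε - x)).comp x ((hasDerivAt_id x).const_sub ε)
  refine HasDerivAt.congr_deriv h ?_
  simp only [FB1]
  norm_num

lemma FB1_dx (ε x : ℝ) : HasDerivAt (FB1 ε) (FB2 ε x) x := by
  have h := ((hasDerivAt_maxpow 1 (ε - x)).comp x ((hasDerivAt_id x).const_sub ε)).const_mul (-4)
  refine HasDerivAt.congr_deriv h ?_
  simp only [FB2]
  norm_num
  ring

lemma FB1_cont (ε : ℝ) : Continuous (FB1 ε) := by unfold FB1; fun_prop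
lemma FB2_cont (ε : ℝ) : Continuous (FB2 ε) := by unfold FB2; fun_prop
lemma FB_cont (ε : ℝ) : Continuous (FB ε) := by unfold FB; fun_prop

lemma DD1_sq (y : ℝ) {R : ℝ} (hR : 0 < R) {k : ℝ} (hk : 0 < k) (x : ℝ) :
    DD1 y R k x ^ 2 = 4 * vv R (x - y) ^ 4 * DD y R k x / k ^ 2 := by
  have hvw := vv_mul hR (x - y)
  have h1 : D1 R (x - y) ^ 2 = 4 * vv R (x - y) ^ 4 * D0 R (x - y) := by
    unfold D1 D0
    generalize vv R (x - y) = v at *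
    have : (v * (x - y)) ^ 2 = (v * (R * (1 - v))) ^ 2 := by
      rw [← hvw, mul_pow, mul_pow, sq_abs]
    linear_combination (4 / 9 * v ^ 2 * (1 + v + v ^ 2) ^ 2) * this
  unfold DD1 DD
  rw [div_pow, h1]
  field_simp

theorem mass_pos {E : Set ℝ} (hEo : IsOpen E) {b σ : ℝ → ℝ → ℝ} (hA1 : A1 E b σ) {s z t : ℝ}
    (hs : 0 ≤ s) (hst : s ≤ t) (ht : t ≤ 1) (hz : z ∈ E) {μ : Kernel ℝ ℝ}
    (hμ : FP E b σ s z μ) : μ t E ≠ 0 := by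
  obtain ⟨R, k, C, γ, hR, hk, hC, hγ, hγ2, hcoef⟩ :=
    coef_bounds hA1 (t := 1) ⟨zero_lt_one, le_rfl⟩ hz
  obtain ⟨σ₀, hσ₀, hell⟩ := hA1.elliptic
  obtain ⟨ρ0, hρ0, hball⟩ := Metric.isOpen_iff.1 hEo z hz
  obtain ⟨ε, hε, hε'⟩ := DD_lower z R k hR hk (lt_min hρ0 (half_pos hR))
  obtain ⟨K, hK⟩ := hA1.lipschitz
  obtain ⟨K', γ', hγ', hK'⟩ := hA1.holder
  have hbm : Measurable (Function.uncurry (tb E b)) := tb_measurable hEo hγ'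
    (fun t ht z hz z' hz' => (hK t ht z hz z' hz').1)
    (fun z hz t ht t' ht' => (hK' z hz t ht t' ht').1)
  have hσm : Measurable (Function.uncurry (tb E σ)) := tb_measurable hEo hγ'
    (fun t ht z hz z' hz' => (hK t ht z hz z' hz').2)
    (fun z hz t ht t' ht' => (hK' z hz t ht t' ht').2)
  have hprob := hμ.prob
  have hAQ : ∀ u ∈ Icc (0:ℝ) 1, ∀ x, |AA E b σ z R k u x| ≤ C ∧ |QQ E σ z R k u x| ≤ C := by
    intro u hu x
    unfold AA QQ
    by_cases hx : x ∈ E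
    · rw [tb_of_mem hu hx, tb_of_mem hu hx]
      exact (hcoef u hu.1 hu.2 x hx).2.2
    · rw [tb_of_notMem hx, tb_of_notMem hx]
      simpa using hC
  have hclose : ∀ x, DD z R k x < ε → x ∈ E ∧ 1 / 2 ≤ vv R (x - z) := by
    intro x hx
    have h1 : |x - z| < min ρ0 (R / 2) := by
      by_contra h
      exact absurd (hε' x (not_lt.1 h)) (not_le.2 hx)
    refine ⟨hball (by rw [Metric.mem_ball, Real.dist_eq]; exact h1.trans_le (min_le_left _ _)), ?_⟩
    have h2 : |x - z| < R / 2 := h1.trans_le (min_le_right _ _)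
    unfold vv
    refine le_max_of_le_right ?_
    have : |x - z| / R ≤ 1 / 2 := by
      rw [div_le_iff₀ hR]; linarith
    linarith
  set q0 := σ₀ ^ 2 / (8 * k ^ 2) with hq0
  have hq00 : 0 < q0 := by positivity
  set G := 4 * C + 12 * q0 with hG
  have hG0 : 0 < G := by positivity
  set Λ := G ^ 2 / (48 * q0 * ε) with hΛ
  have hΛ0 : 0 < Λ := by positivity
  -- differential inequality
  have point : ∀ u ∈ Icc (0:ℝ) 1, ∀ x, -Λ * FB ε (DD z R k x) ≤
      FB1 ε (DD z R k x) * AA E b σ z R k u x + FB2 ε (DD z R k x) * QQ E σ z R k u x := by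
    intro u hu x
    by_cases hx : DD z R k x < ε
    · obtain ⟨hxE, hv⟩ := hclose x hx
      have hm : max 0 (ε - DD z R k x) = ε - DD z R k x := max_eq_right (by linarith)
      have hA := (hAQ u hu x).1
      have hQ : q0 * DD z R k x ≤ QQ E σ z R k u x := by
        unfold QQ
        rw [tb_of_mem hu hxE, DD1_sq z hR hk]
        have h1 : σ₀ ^ 2 ≤ σ u x ^ 2 := pow_le_pow_left₀ hσ₀.le (hell u hu x hxE) 2
        have h2 : (1 / 2) ^ 4 ≤ vv R (x - z) ^ 4 := pow_le_pow_left₀ (by norm_num) hv 4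
        have h3 := DD_nonneg z R k x
        calc q0 * DD z R k x = σ₀ ^ 2 / 2 * (4 * (1 / 2) ^ 4 * DD z R k x / k ^ 2) := by
              rw [hq0]; field_simp; ring
          _ ≤ σ u x ^ 2 / 2 * (4 * vv R (x - z) ^ 4 * DD z R k x / k ^ 2) := by gcongr
      unfold FB FB1 FB2
      rw [hm]
      set m := ε - DD z R k x with hmdef
      have hm0 : 0 < m := by linarith
      have hDDm : DD z R k x = ε - m := by rw [hmdef]; ring
      rw [hDDm] at hQ
      have s1 : m ^ 2 * (q0 * (ε - m)) ≤ m ^ 2 * QQ E σ z R k u x :=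
        mul_le_mul_of_nonneg_left hQ (by positivity)
      have s2 : m ^ 3 * AA E b σ z R k u x ≤ m ^ 3 * C :=
        mul_le_mul_of_nonneg_left ((le_abs_self _).trans hA) (by positivity)
      have s3 : 0 ≤ m ^ 2 * (12 * q0 * ε - G * m + Λ * m ^ 2) := by
        refine mul_nonneg (by positivity) ?_
        have e : 12 * q0 * ε - G * m + Λ * m ^ 2 =
            (24 * q0 * ε - G * m) ^ 2 / (48 * q0 * ε) := by
          rw [hΛ]; field_simp; ring
        rw [e]; positivity
      rw [hG] at s3
      linarith only [s1, s2, s3]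
    · have hm : max 0 (ε - DD z R k x) = 0 := max_eq_left (by linarith)
      unfold FB FB1 FB2
      rw [hm]
      simp
  obtain ⟨M1, hM1⟩ := (isCompact_Icc (a := 0) (b := R ^ 2 / 9 / k ^ 2)).exists_bound_of_continuousOn
    (FB1_cont ε).continuousOn
  obtain ⟨M2, hM2⟩ := (isCompact_Icc (a := 0) (b := R ^ 2 / 9 / k ^ 2)).exists_bound_of_continuousOn
    (FB2_cont ε).continuousOn
  set M := max (max M1 M2) 0 with hM
  have hM0 : 0 ≤ M := le_max_right _ _
  have hMM : ∀ x ∈ Icc 0 (R ^ 2 / 9 / k ^ 2), |FB1 ε x| ≤ M ∧ |FB2 ε x| ≤ M := by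
    intro x hx
    exact ⟨(hM1 x hx).trans ((le_max_left _ _).trans (le_max_left _ _)),
      (hM2 x hx).trans ((le_max_right _ _).trans (le_max_left _ _))⟩
  set L := 2 * M * C with hL
  have hL0 : 0 ≤ L := by positivity
  set g : ℝ → ℝ := fun c => ∫ x, FB ε (DD z R k x) ∂μ c with hg
  have hgint : ∀ c, Integrable (fun x => FB ε (DD z R k x)) (μ c) := fun c =>
    integrable_comp_DD (FB_cont ε) z hR k
  have step : ∀ p q, s ≤ p → p ≤ q → q ≤ t →
      |g q - g p| ≤ L * (q - p) ∧ -Λ * (g q + L * (q - p)) * (q - p) ≤ g q - g p := by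
    have lip : ∀ p q, s ≤ p → p ≤ q → q ≤ t → |g q - g p| ≤ L * (q - p) := by
      intro p q hp hpq hq
      simp only [hg]
      rw [dynkin hμ z hR k (FB_dx ε) (FB1_dx ε) (FB2_cont ε) hp hpq (hq.trans ht)]
      have hI := (inner_integrable (y := z) (R := R) (k := k) (C := C) hμ hR hbm hσm
        (fun u hu x => hAQ u ⟨hs.trans (hp.trans hu.1), hu.2.trans (hq.trans ht)⟩ x)
        (FB1_cont ε) (FB2_cont ε) hpq hMM).2.2
      have h2 := intervalIntegral.norm_integral_le_of_norm_le_const (a := p) (b := q) (C := L)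
        (f := fun u => ∫ x, (FB1 ε (DD z R k x) * AA E b σ z R k u x +
          FB2 ε (DD z R k x) * QQ E σ z R k u x) ∂(μ u)) (fun v hv => by
          rw [uIoc_of_le hpq] at hv
          exact hI v ⟨hv.1.le, hv.2⟩)
      rw [Real.norm_eq_abs, abs_of_nonneg (sub_nonneg.2 hpq)] at h2
      exact h2
    intro p q hp hpq hq
    refine ⟨lip p q hp hpq hq, ?_⟩
    have hI := inner_integrable (y := z) (R := R) (k := k) (C := C) hμ hR hbm hσm
        (fun u hu x => hAQ u ⟨hs.trans (hp.trans hu.1), hu.2.trans (hq.trans ht)⟩ x)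
        (FB1_cont ε) (FB2_cont ε) hpq hMM
    have hd := dynkin hμ z hR k (FB_dx ε) (FB1_dx ε) (FB2_cont ε) hp hpq (hq.trans ht)
    have hlow := intervalIntegral.integral_mono_on hpq
      (intervalIntegrable_const (c := -Λ * (g q + L * (q - p)))) hI.1 (fun u hu => by
        have h1 : ∫ x, -Λ * FB ε (DD z R k x) ∂μ u ≤
            ∫ x, (FB1 ε (DD z R k x) * AA E b σ z R k u x +
              FB2 ε (DD z R k x) * QQ E σ z R k u x) ∂(μ u) :=
          integral_mono ((hgint u).const_mul _) (hI.2.1 u hu) (point u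
            ⟨hs.trans (hp.trans hu.1), hu.2.trans (hq.trans ht)⟩)
        rw [integral_const_mul] at h1
        refine le_trans ?_ h1
        have h2 := (abs_le.1 (lip u q (hp.trans hu.1) hu.2 hq)).1
        have h3 : L * (q - u) ≤ L * (q - p) := mul_le_mul_of_nonneg_left (by linarith [hu.1]) hL0
        have h4 : g u ≤ g q + L * (q - p) := by linarith
        have := mul_le_mul_of_nonneg_left h4 hΛ0.le
        linarith)
    rw [intervalIntegral.integral_const, smul_eq_mul] at hlow
    simp only [hg] at hlow ⊢
    rw [hd]
    linarith
  have hg0 : ∀ c, 0 ≤ g c := fun c => integral_nonneg fun x => by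
    simp only [FB]; positivity
  have hmono : -(Real.exp (Λ * t) * g t) ≤ -(Real.exp (Λ * s) * g s) := by
    refine partition_le (f := fun c => -(Real.exp (Λ * c) * g c)) hst fun e he => ?_
    set N := Real.exp (Λ * t) * Λ * L with hN
    have hN0 : 0 ≤ N := by positivity
    refine ⟨e / (N + 1), by positivity, fun p q hp hpq hq hle => ?_⟩
    have h1 := (step p q hp hpq hq).2
    have hd0 : 0 ≤ q - p := sub_nonneg.2 hpq
    set X := Real.exp (Λ * p) with hX
    have hX0 : 0 < X := Real.exp_pos _
    have h2 : X * (1 + Λ * (q - p)) ≤ Real.exp (Λ * q) := by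
      have e1 : Real.exp (Λ * q) = X * Real.exp (Λ * (q - p)) := by
        rw [hX, ← Real.exp_add]; ring_nf
      rw [e1]
      exact mul_le_mul_of_nonneg_left (by linarith [Real.add_one_le_exp (Λ * (q - p))]) hX0.le
    have h3 := mul_le_mul_of_nonneg_right h2 (hg0 q)
    have h4 := mul_le_mul_of_nonneg_left h1 hX0.le
    have h5 : X ≤ Real.exp (Λ * t) := Real.exp_le_exp.2 (mul_le_mul_of_nonneg_left
      (hpq.trans hq) hΛ0.le)
    have h6 : X * Λ * L * (q - p) ≤ e := by
      have h7 : X * Λ * L ≤ N := by rw [hN]; gcongr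
      have h8 : N * (q - p) ≤ e := by
        rw [le_div_iff₀ (by linarith)] at hle
        linarith
      exact (mul_le_mul_of_nonneg_right h7 hd0).trans h8
    have h9 := mul_le_mul_of_nonneg_right h6 hd0
    linarith
  have hgs : 0 < g s := by
    simp only [hg]
    rw [hμ.init, integral_dirac]
    have h0 : DD z R k z ≤ 0 := by
      have := DD_le_sq z R k z hR
      simpa using this
    unfold FB
    have : 0 < max 0 (ε - DD z R k z) := lt_max_of_lt_right (by linarith)
    positivity
  have hgt : 0 < g t := by
    have h1 : 0 < Real.exp (Λ * s) * g s := mul_pos (Real.exp_pos _) hgs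
    have h2 : 0 < Real.exp (Λ * t) * g t := by linarith
    exact (pos_iff_pos_of_mul_pos h2).1 (Real.exp_pos _)
  intro h0
  have hz0 : g t = 0 := by
    simp only [hg]
    refine integral_eq_zero_of_ae ?_
    have hae : ∀ᵐ x ∂μ t, x ∉ E := measure_eq_zero_iff_ae_notMem.1 h0
    filter_upwards [hae] with x hx
    have h1 : ε ≤ DD z R k x := by
      by_contra h
      exact hx (hclose x (not_le.1 h)).1
    unfold FB
    rw [max_eq_left (by linarith)]
    simp
  linarith

lemma density_nonneg {E : Set ℝ} (hEo : IsOpen E) {f : ℝ → ℝ} (hf : ContinuousOn f E)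
    {ν : Measure ℝ} [IsProbabilityMeasure ν]
    (hν : ∀ A : Set ℝ, MeasurableSet A → A ⊆ E → ν A = ENNReal.ofReal (∫ y in A, f y))
    (h0 : ν E ≠ 0) : (∀ y ∈ E, 0 ≤ f y) ∧ IntegrableOn f E ∧ ∫ y in E, f y ≤ 1 := by
  have hE := hν E hEo.measurableSet Subset.rfl
  have hint : IntegrableOn f E := by
    by_contra h
    rw [integral_undef h] at hE
    simp at hE
    exact h0 hE
  have hpos : 0 < ∫ y in E, f y := by
    by_contra h
    rw [ENNReal.ofReal_of_nonpos (not_lt.1 h)] at hE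
    exact h0 hE
  refine ⟨fun y hy => ?_, hint, ?_⟩
  · by_contra hneg
    push Not at hneg
    have hev : ∀ᶠ x in 𝓝 y, f x < 0 ∧ x ∈ E :=
      ((hf.continuousAt (hEo.mem_nhds hy)).eventually (gt_mem_nhds hneg)).and (hEo.mem_nhds hy)
    obtain ⟨e, he, hball⟩ := Metric.eventually_nhds_iff.1 hev
    have hIE : Metric.ball y e ⊆ E := fun x hx => (hball hx).2
    have hIneg : ∫ x in Metric.ball y e, f x < 0 := by
      have h1 : 0 < ∫ x in Metric.ball y e, -f x := by
        rw [setIntegral_pos_iff_support_of_nonneg_ae]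
        · have : Function.support (fun x => -f x) ∩ Metric.ball y e = Metric.ball y e := by
            refine inter_eq_right.2 fun x hx => ?_
            have := (hball hx).1
            simp only [Function.mem_support]
            linarith
          rw [this]
          exact Metric.measure_ball_pos _ _ he
        · refine (ae_restrict_iff' measurableSet_ball).2 (ae_of_all _ fun x hx => ?_)
          have := (hball hx).1
          simp only [Pi.zero_apply]
          linarith
        · exact (hint.mono_set hIE).neg
      rw [integral_neg] at h1
      linarith
    have hI := hν _ measurableSet_ball hIE
    rw [ENNReal.ofReal_of_nonpos hIneg.le] at hI
    have hA := hν (E \ Metric.ball y e) (hEo.measurableSet.diff measurableSet_ball) sdiff_subset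
    rw [measure_sdiff_null hI, hE, setIntegral_sdiff measurableSet_ball hint hIE] at hA
    rw [ENNReal.ofReal_eq_ofReal_iff hpos.le (by linarith)] at hA
    linarith
  · have h1 : ν E ≤ 1 := prob_le_one
    rw [hE] at h1
    exact ENNReal.ofReal_le_one.1 h1

/-- **Proposition 2.1 (3).** Under Assumption (A1): (i) for any `r > 0`,
`y ∈ E`, `t > 0`, the transition density `q(s,t;z,y)` is bounded uniformly over `s < t` and
`z ∈ E` with `|y − z| ≥ r`; (ii) for every `x ∈ E`,
`∫_{B_r^c(z)} q(0,t−s;x,u) q(t−s,t;u,z) du → 0` as `s → 0⁺`. -/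
theorem killed_diffusion_transition_density_offdiagonal
    (ℓ : EReal) (E : Set ℝ) (hE : E = {x : ℝ | ℓ < (x : EReal)})
    (b σ : ℝ → ℝ → ℝ) (hA1 : A1 E b σ)
    (κ : ℝ → ℝ → ℝ → Measure ℝ)
    (hκ : ∀ s ∈ Ico (0:ℝ) 1, ∀ z ∈ E,
      ∃ (Ω : Type) (m0 : MeasurableSpace Ω) (P : Measure Ω) (Z : ℝ → Ω → ℝ),
        IsProbabilityMeasure P ∧ (∀ᵐ ω ∂P, Z s ω = z) ∧
        RefDiffusion P E b σ Z s ∧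
        ∀ t ∈ Icc s 1, κ s z t = P.map (Z t))
    -- `q` is the (regular version of the) transition density of the killed diffusion:
    (q : ℝ → ℝ → ℝ → ℝ → ℝ)
    (hq : ∀ s ∈ Ico (0:ℝ) 1, ∀ z ∈ E, ∀ t ∈ Ioc s 1, ∀ A : Set ℝ,
        MeasurableSet A → A ⊆ E → κ s z t A = ENNReal.ofReal (∫ y in A, q s t z y))
    (hqreg : ∀ t ∈ Ioc (0:ℝ) 1,
        ContinuousOn (fun p : ℝ × ℝ × ℝ => q p.1 t p.2.1 p.2.2) (Ico 0 t ×ˢ E ×ˢ E)) :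
    ∀ r : ℝ, 0 < r → ∀ t ∈ Ioc (0:ℝ) 1,
      -- (i) off-diagonal boundedness
      (∀ y ∈ E, ∃ M : ℝ,
        ∀ s ∈ Ico (0:ℝ) t, ∀ z ∈ E, r ≤ |y - z| → q s t z y ≤ M) ∧
      -- (ii) vanishing of the off-diagonal Chapman–Kolmogorov mass as `s → 0⁺`
      (∀ x ∈ E, ∀ z ∈ E,
        Tendsto (fun s => ∫ u in {u | u ∈ E ∧ r ≤ |u - z|},
            q 0 (t - s) x u * q (t - s) t u z) (𝓝[>] (0:ℝ)) (𝓝 0)) := by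
  have hEo := E_isOpen hE
  -- Fokker-Planck kernels
  have hFP : ∀ s ∈ Ico (0:ℝ) 1, ∀ z ∈ E, ∃ μ : Kernel ℝ ℝ, FP E b σ s z μ ∧
      ∀ t ∈ Icc s 1, κ s z t = μ t := by
    intro s hs z hz
    obtain ⟨Ω, m0, P, Z, hP, hz0, hZ, hk⟩ := hκ s hs z hz
    obtain ⟨μ, hμ, hμ'⟩ := exists_FP hE hA1 hs hP hz0 hZ
    exact ⟨μ, hμ, fun t ht => (hk t ht).trans (hμ' t)⟩
  have hcont : ∀ t ∈ Ioc (0:ℝ) 1, ∀ s ∈ Ico 0 t, ∀ z ∈ E, ContinuousOn (fun y => q s t z y) E := by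
    intro t ht s hs z hz
    exact (hqreg t ht).comp (f := fun y => (s, z, y)) (by fun_prop) fun y hy => ⟨hs, hz, hy⟩
  have hnn : ∀ t ∈ Ioc (0:ℝ) 1, ∀ s ∈ Ico 0 t, ∀ z ∈ E, (∀ y ∈ E, 0 ≤ q s t z y) ∧
      IntegrableOn (fun y => q s t z y) E ∧ ∫ y in E, q s t z y ≤ 1 := by
    intro t ht s hs z hz
    have hs1 : s ∈ Ico (0:ℝ) 1 := ⟨hs.1, hs.2.trans_le ht.2⟩
    obtain ⟨μ, hμ, hμ'⟩ := hFP s hs1 z hz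
    have := hμ.prob
    have hν : ∀ A : Set ℝ, MeasurableSet A → A ⊆ E →
        μ t A = ENNReal.ofReal (∫ y in A, q s t z y) := by
      intro A hA hAE
      rw [← hμ' t ⟨hs.2.le, ht.2⟩]
      exact hq s hs1 z hz t ⟨hs.2, ht.2⟩ A hA hAE
    exact density_nonneg hEo (hcont t ht s hs z hz) hν
      (mass_pos hEo hA1 hs.1 hs.2.le ht.2 hz hμ)
  intro r hr t ht
  have key : ∀ y ∈ E, ∃ C τ1 : ℝ, 0 < τ1 ∧ 0 ≤ C ∧ ∀ s ∈ Ico (0:ℝ) t, ∀ z ∈ E, r ≤ |y - z| →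
      (t - s ≤ τ1 → q s t z y ≤ C * √(t - s)) ∧ q s t z y ≤ C := by
    intro y hy
    obtain ⟨C, τ1, hτ1, hC, H⟩ := mass_bound hEo hA1 ht hy hr
    refine ⟨C, τ1, hτ1, hC, fun s hs z hz hyz => ?_⟩
    have hs1 : s ∈ Ico (0:ℝ) 1 := ⟨hs.1, hs.2.trans_le ht.2⟩
    obtain ⟨μ, hμ, hμ'⟩ := hFP s hs1 z hz
    have := hμ.prob
    have hν : ∀ A : Set ℝ, MeasurableSet A → A ⊆ E →
        μ t A = ENNReal.ofReal (∫ y in A, q s t z y) := by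
      intro A hA hAE
      rw [← hμ' t ⟨hs.2.le, ht.2⟩]
      exact hq s hs1 z hz t ⟨hs.2, ht.2⟩ A hA hAE
    have hsmall : ∀ᶠ ρ in 𝓝[>] (0:ℝ), ρ ^ 2 ≤ τ1 := by
      have hc : Tendsto (fun ρ : ℝ => ρ ^ 2) (𝓝[>] 0) (𝓝 0) := by
        have : Continuous fun ρ : ℝ => ρ ^ 2 := by fun_prop
        simpa using (this.tendsto 0).mono_left nhdsWithin_le_nhds
      exact (hc.eventually (gt_mem_nhds hτ1)).mono fun _ h => h.le
    constructor
    · intro hts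
      have hlim : Tendsto (fun ρ : ℝ => C * √(t - s + ρ ^ 2)) (𝓝[>] 0) (𝓝 (C * √(t - s))) := by
        have : Continuous fun ρ : ℝ => C * √(t - s + ρ ^ 2) := by fun_prop
        simpa using (this.tendsto 0).mono_left nhdsWithin_le_nhds
      refine density_le hEo (hcont t ht s hs z hz) hν hy (by positivity) hlim ?_
      filter_upwards [hsmall, self_mem_nhdsWithin] with ρ h1 h2
      exact (H s hs z hyz μ hμ ρ h2 h1).1 hts
    · refine density_le hEo (hcont t ht s hs z hz) hν hy hC tendsto_const_nhds ?_
      filter_upwards [hsmall, self_mem_nhdsWithin] with ρ h1 h2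
      exact (H s hs z hyz μ hμ ρ h2 h1).2
  refine ⟨fun y hy => ?_, fun x hx z hz => ?_⟩
  · obtain ⟨C, τ1, -, -, H⟩ := key y hy
    exact ⟨C, fun s hs z hz h => (H s hs z hz h).2⟩
  · obtain ⟨C, τ1, hτ1, hC, H⟩ := key z hz
    have hlim : Tendsto (fun s : ℝ => C * √s) (𝓝[>] 0) (𝓝 0) := by
      have : Continuous fun s : ℝ => C * √s := by fun_prop
      simpa using (this.tendsto 0).mono_left nhdsWithin_le_nhds
    have hmeas : MeasurableSet {u | u ∈ E ∧ r ≤ |u - z|} :=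
      hEo.measurableSet.inter (measurableSet_le measurable_const
        (by fun_prop : Measurable fun u : ℝ => |u - z|))
    have hsub : {u | u ∈ E ∧ r ≤ |u - z|} ⊆ E := fun u hu => hu.1
    have hbd : ∀ᶠ s in 𝓝[>] (0:ℝ), 0 ≤ (∫ u in {u | u ∈ E ∧ r ≤ |u - z|},
            q 0 (t - s) x u * q (t - s) t u z) ∧ (∫ u in {u | u ∈ E ∧ r ≤ |u - z|},
            q 0 (t - s) x u * q (t - s) t u z) ≤ C * √s := by
      have e1 : ∀ᶠ s in 𝓝[>] (0:ℝ), s < min t τ1 :=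
        eventually_nhdsWithin_of_eventually_nhds (gt_mem_nhds (lt_min ht.1 hτ1))
      filter_upwards [e1, self_mem_nhdsWithin] with s hs1 hs0
      have hs0' : (0:ℝ) < s := hs0
      have hst : s < t := hs1.trans_le (min_le_left _ _)
      have hsτ : s < τ1 := hs1.trans_le (min_le_right _ _)
      have hts : t - s ∈ Ioc (0:ℝ) 1 := ⟨by linarith, by linarith [ht.2]⟩
      obtain ⟨n1, n2, n3⟩ := hnn (t - s) hts 0 ⟨le_rfl, hts.1⟩ x hx
      have htsI : t - s ∈ Ico (0:ℝ) t := ⟨hts.1.le, by linarith⟩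
      have e : t - (t - s) = s := by ring
      have n4 : ∀ u ∈ {u | u ∈ E ∧ r ≤ |u - z|}, 0 ≤ q 0 (t - s) x u * q (t - s) t u z := by
        intro u hu
        exact mul_nonneg (n1 u hu.1) ((hnn t ht (t - s) htsI u hu.1).1 z hz)
      refine ⟨setIntegral_nonneg hmeas n4, ?_⟩
      calc (∫ u in {u | u ∈ E ∧ r ≤ |u - z|}, q 0 (t - s) x u * q (t - s) t u z)
          ≤ ∫ u in {u | u ∈ E ∧ r ≤ |u - z|}, q 0 (t - s) x u * (C * √s) := by
            refine integral_mono_of_nonneg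
              ((ae_restrict_iff' hmeas).2 (ae_of_all _ n4))
              ((n2.mono_set hsub).mul_const _)
              ((ae_restrict_iff' hmeas).2 (ae_of_all _ fun u hu => ?_))
            have h1 := (H (t - s) htsI u hu.1 (by rw [abs_sub_comm]; exact hu.2)).1
              (by rw [e]; exact hsτ.le)
            rw [e] at h1
            exact mul_le_mul_of_nonneg_left h1 (n1 u hu.1)
        _ = (∫ u in {u | u ∈ E ∧ r ≤ |u - z|}, q 0 (t - s) x u) * (C * √s) :=
            integral_mul_const _ _
        _ ≤ 1 * (C * √s) := by
            refine mul_le_mul_of_nonneg_right ?_ (by positivity)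
            refine le_trans (setIntegral_mono_set n2 ?_ hsub.eventuallyLE) n3
            exact (ae_restrict_iff' hEo.measurableSet).2 (ae_of_all _ n1)
        _ = C * √s := one_mul _
    exact squeeze_zero' (hbd.mono fun s h => h.1) (hbd.mono fun s h => h.2) hlim


end
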